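/- Let ρ be a computable, shift-invariant, ergodic Borel probability measure on 2^ℕ, and suppose there is a constant D with ρ[x] ≥ 2^{−D·|x|} for every binary string x (equivalently, h_n^ρ is bounded above by D for all n). Let μ be a Borel probability measure with μ ≪_ML ρ, and write s = H(ρ). Then lim_n ∫ |h_n^ρ(Z) − s| dμ(Z) = 0. -/

import Mathlib

open MeasureTheory Filter

/-- Cantor space: the space of infinite binary sequences. -/
abbrev Cantor : Type := ℕ → Bool

/-- Finite binary strings. -/
abbrev BStr : Type := List Bool

/-- The cylinder set of sequences extending the string `x`. -/
def cyl (x : BStr) : Set Cantor := {Z | ∀ i : Fin x.length, Z i.1 = x.get i}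

/-- The string of the first `n` bits of `Z`. -/
def seg (Z : Cantor) (n : ℕ) : BStr := List.ofFn fun i : Fin n => Z i.1

/-- `lam` is the uniform (fair-coin product) measure: every cylinder `[x]`
has measure `2^{-|x|}`. -/
def IsUniform (lam : Measure Cantor) : Prop :=
  ∀ x : BStr, lam (cyl x) = (2 : ENNReal)⁻¹ ^ x.length

/-- `(G_m)` is a Martin-Löf test with respect to the measure `ρ`:
the sets `G_m` are uniformly effectively open and `ρ (G_m) ≤ 2^{-m}`. -/
def IsMLTest (ρ : Measure Cantor) (G : ℕ → Set Cantor) : Prop :=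
  (∃ σ : ℕ → ℕ → BStr, Computable₂ σ ∧ ∀ m, G m = ⋃ i, cyl (σ m i)) ∧
  ∀ m, ρ (G m) ≤ (2 : ENNReal)⁻¹ ^ m

/-- `μ` is Martin-Löf absolutely continuous in `ρ`: `inf_m μ(G_m) = 0`
for every `ρ`-Martin-Löf test `(G_m)`. -/
def MLAC (μ ρ : Measure Cantor) : Prop :=
  ∀ G : ℕ → Set Cantor, IsMLTest ρ G → ⨅ m, μ (G m) = 0

/-- `Z` is Martin-Löf random with respect to `lam`. -/
def MLRandom (lam : Measure Cantor) (Z : Cantor) : Prop :=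
  ∀ G : ℕ → Set Cantor, IsMLTest lam G → Z ∉ ⋂ m, G m

/-- `ρ` is a computable measure: `ρ [x]` is a computable real, uniformly in `x`. -/
def ComputableMeasure (ρ : Measure Cantor) : Prop :=
  ∃ q : BStr → ℕ → ℚ, Computable₂ q ∧
    ∀ x k, |(q x k : ℝ) - (ρ (cyl x)).toReal| ≤ (2 : ℝ)⁻¹ ^ k

/-- `U` is a universal plain machine. -/
def UniversalPlain (U : BStr →. BStr) : Prop :=
  Partrec U ∧ ∀ M : BStr →. BStr, Partrec M →
    ∃ c : ℕ, ∀ p x, x ∈ M p → ∃ q : BStr, q.length ≤ p.length + c ∧ x ∈ U q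

/-- The domain of `M` is an antichain under the prefix relation. -/
def PrefixFreeDom (M : BStr →. BStr) : Prop :=
  ∀ p q : BStr, (M p).Dom → (M q).Dom → p <+: q → p = q

/-- `U` is a universal prefix-free machine. -/
def UniversalPrefixFree (U : BStr →. BStr) : Prop :=
  Partrec U ∧ PrefixFreeDom U ∧
  ∀ M : BStr →. BStr, Partrec M → PrefixFreeDom M →
    ∃ c : ℕ, ∀ p x, x ∈ M p → ∃ q : BStr, q.length ≤ p.length + c ∧ x ∈ U q

/-- Kolmogorov complexity of the string `x` with respect to the machine `U`:
the minimal length of a `U`-description of `x`. -/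
noncomputable def cpx (U : BStr →. BStr) (x : BStr) : ℕ :=
  sInf {n | ∃ q : BStr, q.length = n ∧ x ∈ U q}

/-- A natural number `n` identified with the string `0^n`. -/
def numStr (n : ℕ) : BStr := List.replicate n false

/-- Complexity of the natural number `n` (i.e., of the string `0^n`). -/
noncomputable def cpxN (U : BStr →. BStr) (n : ℕ) : ℕ := cpx U (numStr n)

/-- The `μ`-average complexity of the strings of length `n`:
`Σ_{|x|=n} cpx(x) · μ[x]`. -/
noncomputable def avgCpx (U : BStr →. BStr) (μ : Measure Cantor) (n : ℕ) : ℝ :=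
  ∑ v : Fin n → Bool, (cpx U (List.ofFn v) : ℝ) * (μ (cyl (List.ofFn v))).toReal

/-- A measure `μ` is trivial for the complexity given by the machine `U`
(e.g. K-trivial when `U` is the universal prefix-free machine, C-trivial
when `U` is the universal plain machine). -/
def MeasTrivial (U : BStr →. BStr) (μ : Measure Cantor) : Prop :=
  ∃ c : ℝ, ∀ n : ℕ, avgCpx U μ n ≤ (cpxN U n : ℝ) + c

/-- The shift operator on Cantor space. -/
def shift (Z : Cantor) : Cantor := fun n => Z (n + 1)

/-- `H_n(ρ) = -(1/n) Σ_{|w|=n} ρ[w] log₂ ρ[w]`, the `n`-th entropy of `ρ`. -/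
noncomputable def entropyAt (ρ : Measure Cantor) (n : ℕ) : ℝ :=
  -(1 / (n : ℝ)) * ∑ v : Fin n → Bool,
    (ρ (cyl (List.ofFn v))).toReal * Real.logb 2 (ρ (cyl (List.ofFn v))).toReal

/-- The empirical entropy of `ρ` along `Z` at length `n`:
`h_n^ρ(Z) = -(1/n) log₂ ρ[Z↾n]`. -/
noncomputable def empEntropy (ρ : Measure Cantor) (n : ℕ) (Z : Cantor) : ℝ :=
  -(1 / (n : ℝ)) * Real.logb 2 (ρ (cyl (seg Z n))).toReal

section RatCode
open Encodable

/-- the raw code of a rational -/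
def ratCode (q : ℚ) : ℕ := @encode ℚ Rat.instEncodable q

theorem ratCode_inj : Function.Injective ratCode := @encode_injective ℚ Rat.instEncodable

instance ratCode_inf : Infinite (Set.range ratCode) :=
  Infinite.of_injective _ (Equiv.ofInjective _ ratCode_inj).injective

instance ratCode_dec : DecidablePred (· ∈ Set.range ratCode) :=
  @decidableRangeEncode ℚ Rat.instEncodable

noncomputable def ratNext (n : ℕ) : ℕ := ratCode (Denumerable.ofNat ℚ n)

theorem ratNext_eq (n : ℕ) :
    ratNext n = (Nat.Subtype.ofNat (Set.range ratCode) n : ℕ) := by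
  have : Denumerable.ofNat ℚ n = (@equivRangeEncode ℚ Rat.instEncodable).symm
      (@Nat.Subtype.ofNat (Set.range (@encode ℚ Rat.instEncodable)) ratCode_dec ratCode_inf n) := by
    rfl
  unfold ratNext
  rw [this]
  have h := (@equivRangeEncode ℚ Rat.instEncodable).apply_symm_apply
    (@Nat.Subtype.ofNat (Set.range (@encode ℚ Rat.instEncodable)) ratCode_dec ratCode_inf n)
  exact congrArg Subtype.val h

theorem ratNext_succ (n : ℕ) : ratNext (n+1) ∈ Set.range ratCode ∧ ratNext n < ratNext (n+1) ∧
    ∀ m, ratNext n < m → m < ratNext (n+1) → m ∉ Set.range ratCode := by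
  refine ⟨⟨_, rfl⟩, ?_, ?_⟩
  · rw [ratNext_eq, ratNext_eq]
    exact Nat.Subtype.lt_succ_self (s := Set.range ratCode) _
  · intro m h1 h2 h3
    rw [ratNext_eq] at h1 h2
    have := (Nat.Subtype.succ_le_of_lt (s := Set.range ratCode) (x := ⟨m, h3⟩)
      (y := Nat.Subtype.ofNat (Set.range ratCode) n) h1)
    exact absurd h2 (not_lt.2 this)

theorem int_encode_nonneg (m : ℕ) : encode (m : ℤ) = 2 * m := by
  rfl

theorem int_encode_neg (m : ℕ) : encode (Int.negSucc m) = 2 * m + 1 := by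
  rfl

theorem ratCode_eq (q : ℚ) : ratCode q = Nat.pair (encode q.num) q.den := by
  rfl

/-- absolute value of the integer with code `j` -/
def jabs (j : ℕ) : ℕ := if j % 2 = 0 then j / 2 else j / 2 + 1

theorem jabs_encode (z : ℤ) : jabs (encode z) = z.natAbs := by
  cases z with
  | ofNat m => 
    have : encode (Int.ofNat m) = 2 * m := rfl
    rw [this]; simp [jabs]
  | negSucc m => 
    rw [int_encode_neg]; unfold jabs
    rw [if_neg (by omega)]; simp; omega

theorem mem_range_ratCode (c : ℕ) : c ∈ Set.range ratCode ↔
    0 < c.unpair.2 ∧ ∀ d < c + 1, d < 2 ∨ ¬ (jabs c.unpair.1 % d = 0 ∧ c.unpair.2 % d = 0) := by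
  constructor
  · rintro ⟨q, rfl⟩
    rw [ratCode_eq]
    simp only [Nat.unpair_pair]
    refine ⟨q.den_pos, fun d _ => ?_⟩
    by_contra! h
    obtain ⟨h1, h2, h3⟩ := h
    rw [jabs_encode] at h2
    have := Nat.dvd_gcd (Nat.dvd_of_mod_eq_zero h2) (Nat.dvd_of_mod_eq_zero h3)
    rw [Nat.Coprime.gcd_eq_one q.reduced, Nat.dvd_one] at this
    omega
  · rintro ⟨h1, h2⟩
    obtain ⟨z, hz⟩ : ∃ z : ℤ, encode z = c.unpair.1 := by
      exact ⟨Denumerable.ofNat ℤ c.unpair.1, Denumerable.encode_ofNat (α := ℤ) _⟩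
    refine ⟨⟨z, c.unpair.2, by omega, ?_⟩, ?_⟩
    · rw [Nat.coprime_iff_gcd_eq_one]
      have hd := h2 (Nat.gcd z.natAbs c.unpair.2) (by
        have := Nat.gcd_le_right z.natAbs h1
        have := Nat.unpair_right_le c
        omega)
      rw [← hz, jabs_encode] at hd
      have hp := Nat.gcd_pos_of_pos_right z.natAbs h1
      rcases hd with hd | hd
      · omega
      · exact absurd ⟨Nat.mod_eq_zero_of_dvd (Nat.gcd_dvd_left _ _), Nat.mod_eq_zero_of_dvd (Nat.gcd_dvd_right _ _)⟩ hd
    · rw [ratCode_eq]; simp only [hz, Nat.pair_unpair]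

theorem jabs_prim : Primrec jabs :=
  Primrec.ite (Primrec.eq.comp (Primrec.nat_mod.comp .id (.const 2)) (.const 0))
    (Primrec.nat_div.comp .id (.const 2))
    (Primrec.succ.comp (Primrec.nat_div.comp .id (.const 2)))

theorem range_ratCode_prim : PrimrecPred (fun c => c ∈ Set.range ratCode) := by
  have h1 : PrimrecPred (fun c : ℕ => 0 < c.unpair.2) :=
    Primrec.nat_lt.comp (.const 0) (Primrec.snd.comp Primrec.unpair)
  have h2 : PrimrecRel (fun d c : ℕ => d < 2 ∨ ¬ (jabs c.unpair.1 % d = 0 ∧ c.unpair.2 % d = 0)) := by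
    suffices h : PrimrecPred (fun p : ℕ × ℕ => p.1 < 2 ∨ ¬ (jabs p.2.unpair.1 % p.1 = 0 ∧ p.2.unpair.2 % p.1 = 0)) from h.primrecRel
    refine PrimrecPred.or (Primrec.nat_lt.comp .fst (.const 2)) (PrimrecPred.not (PrimrecPred.and ?_ ?_))
    · exact Primrec.eq.comp (Primrec.nat_mod.comp (jabs_prim.comp (Primrec.fst.comp (Primrec.unpair.comp .snd))) .fst) (.const 0)
    · exact Primrec.eq.comp (Primrec.nat_mod.comp (Primrec.snd.comp (Primrec.unpair.comp .snd)) .fst) (.const 0)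
  have h3 := PrimrecRel.forall_lt h2
  refine (h1.and (h3.comp (Primrec.succ) Primrec.id)).of_eq fun c => ?_
  rw [mem_range_ratCode]; rfl

theorem ratNext_comp : Computable ratNext := by
  classical
  have hp : Partrec₂ (fun (x : ℕ) (m : ℕ) => (Part.some (decide (x < m ∧ m ∈ Set.range ratCode)) : Part Bool)) := by
    have : Computable (fun p : ℕ × ℕ => decide (p.1 < p.2 ∧ p.2 ∈ Set.range ratCode)) := by
      refine Primrec.to_comp ?_
      exact primrecPred_iff_primrec_decide.1 ((Primrec.nat_lt.comp .fst .snd).and (range_ratCode_prim.comp .snd))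
    exact this
  have h2 := Partrec.rfind hp
  have h3 : Partrec (fun n : ℕ => (Nat.rec (Part.some (ratNext 0)) (fun _ IH => IH.bind fun x => Nat.rfind (fun (m : ℕ) => (Part.some (decide (x < m ∧ m ∈ Set.range ratCode)) : Part Bool))) n : Part ℕ)) :=
    Partrec.nat_rec (f := fun n : ℕ => n) (g := fun _ => Part.some (ratNext 0)) (h := fun _ y => Nat.rfind (fun (m : ℕ) => (Part.some (decide (y.2 < m ∧ m ∈ Set.range ratCode)) : Part Bool))) Computable.id (Computable.const _) (by
      exact h2.comp (Computable.snd.comp Computable.snd))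
  refine Partrec.of_eq_tot h3 fun n => ?_
  induction n with
  | zero => simp
  | succ n ih =>
    obtain ⟨h4, h5, h6⟩ := ratNext_succ n
    refine Part.mem_bind ih ?_
    refine Nat.mem_rfind.2 ⟨?_, ?_⟩
    · refine Part.mem_some_iff.2 (Eq.symm (decide_eq_true ⟨h5, h4⟩))
    · intro m hm
      refine Part.mem_some_iff.2 (Eq.symm (decide_eq_false ?_))
      intro h
      exact h6 m h.1 hm h.2

/-- floor of `q * 2^k` as a natural number -/
def rfl2 (q : ℚ) (k : ℕ) : ℕ := (⌊q * 2 ^ k⌋).toNat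

theorem rfl2_eq (q : ℚ) (k : ℕ) : rfl2 q k =
    if (ratCode q).unpair.1 % 2 = 0 then ((ratCode q).unpair.1 / 2) * 2 ^ k / (ratCode q).unpair.2 else 0 := by
  rw [ratCode_eq]; simp only [Nat.unpair_pair]
  have hq : q * 2 ^ k = ((q.num * 2 ^ k : ℤ) : ℚ) / (q.den : ℚ) := by
    conv_lhs => rw [← Rat.num_div_den q]
    push_cast; ring
  unfold rfl2
  rw [hq, Rat.floor_intCast_div_natCast]
  rcases hn : q.num with m | m
  · have : encode (Int.ofNat m) = 2 * m := rfl
    rw [this, if_pos (by omega)]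
    have : (Int.ofNat m * 2 ^ k / (q.den : ℤ)) = ((m * 2 ^ k / q.den : ℕ) : ℤ) := by simp
    rw [this, Int.toNat_natCast, Nat.mul_div_cancel_left m (by norm_num)]
  · rw [int_encode_neg, if_neg (by omega)]
    apply Int.toNat_of_nonpos
    apply Int.ediv_nonpos_of_nonpos_of_neg _ (by positivity)
    exact mul_nonpos_of_nonpos_of_nonneg (by omega) (by positivity)

theorem pow_prim : Primrec₂ (fun a b : ℕ => a ^ b) := by
  exact Primrec₂.unpaired'.1 Nat.Primrec.pow

theorem ratCode_comp : Computable ratCode := by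
  have : Computable (fun q : ℚ => ratNext (@encode ℚ Primcodable.toEncodable q)) := ratNext_comp.comp Computable.encode
  refine this.of_eq fun q => ?_
  unfold ratNext; exact congrArg ratCode (Denumerable.ofNat_encode (α := ℚ) q)

theorem rfl2_comp : Computable₂ rfl2 := by
  have h : Computable (fun p : ℕ × ℕ => if p.1.unpair.1 % 2 = 0 then (p.1.unpair.1 / 2) * 2 ^ p.2 / p.1.unpair.2 else 0) := by
    refine Primrec.to_comp ?_
    have h1 : Primrec (fun p : ℕ × ℕ => p.1.unpair.1) := Primrec.fst.comp (Primrec.unpair.comp .fst)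
    have h2 : Primrec (fun p : ℕ × ℕ => p.1.unpair.2) := Primrec.snd.comp (Primrec.unpair.comp .fst)
    refine Primrec.ite (Primrec.eq.comp (Primrec.nat_mod.comp h1 (.const 2)) (.const 0)) ?_ (.const 0)
    exact Primrec.nat_div.comp (Primrec.nat_mul.comp (Primrec.nat_div.comp h1 (.const 2)) (pow_prim.comp (.const 2) .snd)) h2
  have h2 : Computable (fun p : ℚ × ℕ => (ratCode p.1, p.2)) :=
    (ratCode_comp.comp Computable.fst).pair Computable.snd
  exact (h.comp h2).of_eq fun p => (rfl2_eq p.1 p.2).symm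

end RatCode


section Basics
open scoped ENNReal

theorem shift_iter (k : ℕ) (Z : Cantor) (i : ℕ) : (shift^[k] Z) i = Z (i + k) := by
  induction k generalizing Z with
  | zero => rfl
  | succ k ih => rw [Function.iterate_succ_apply, ih]; simp [shift]; congr 1

@[simp] theorem seg_length (Z : Cantor) (n : ℕ) : (seg Z n).length = n := by simp [seg]

theorem seg_get (Z : Cantor) (n i : ℕ) (h : i < (seg Z n).length) : (seg Z n)[i] = Z i := by
  simp [seg]

theorem seg_take (Z : Cantor) (n m : ℕ) : (seg Z n).take m = seg Z (min m n) := by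
  apply List.ext_getElem
  · simp
  · intro i h1 h2; simp [seg_get]

theorem seg_take' (Z : Cantor) {n m : ℕ} (h : m ≤ n) : (seg Z n).take m = seg Z m := by
  rw [seg_take, min_eq_left h]

theorem seg_drop (Z : Cantor) (n k : ℕ) : (seg Z n).drop k = seg (shift^[k] Z) (n - k) := by
  apply List.ext_getElem
  · simp
  · intro i h1 h2; simp [seg_get, shift_iter, add_comm]

theorem seg_add (Z : Cantor) (n m : ℕ) : seg Z (n + m) = seg Z n ++ seg (shift^[n] Z) m := by
  rw [← List.take_append_drop n (seg Z (n+m)), seg_take' Z (by omega), seg_drop]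
  simp

theorem seg_zero (Z : Cantor) : seg Z 0 = [] := by simp [seg]

theorem mem_cyl_iff (Z : Cantor) (x : BStr) : Z ∈ cyl x ↔ seg Z x.length = x := by
  unfold cyl
  simp only [Set.mem_ofPred_eq, List.get_eq_getElem]
  constructor
  · intro h
    apply List.ext_getElem
    · simp
    · intro i h1 h2; rw [seg_get]; exact h ⟨i, h2⟩
  · intro h i
    have := List.getElem_of_eq h (i := i.1) (by simp)
    rw [seg_get] at this; exact this

theorem cyl_seg (Z : Cantor) (n : ℕ) : Z ∈ cyl (seg Z n) := by
  rw [mem_cyl_iff]; simp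

theorem mem_cyl_of_length {Z : Cantor} {x : BStr} {n : ℕ} (h : x.length = n) : Z ∈ cyl x ↔ seg Z n = x := by
  rw [mem_cyl_iff, h]

theorem cyl_nil : cyl [] = Set.univ := by
  ext Z; simp [mem_cyl_iff, seg_zero]

theorem measurable_cyl (x : BStr) : MeasurableSet (cyl x) := by
  unfold cyl
  rw [Set.ofPred_forall]
  refine MeasurableSet.iInter fun i => ?_
  exact measurable_pi_apply (X := fun _ : ℕ => Bool) i.1 (MeasurableSet.singleton _)

theorem measurable_shift : Measurable shift := by
  refine measurable_pi_lambda _ fun n => measurable_pi_apply _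

theorem measurableSet_seg (p : BStr → Prop) (n : ℕ) : MeasurableSet {Z | p (seg Z n)} := by
  have : {Z | p (seg Z n)} = ⋃ x : BStr, ⋃ _ : x.length = n ∧ p x, cyl x := by
    ext Z
    simp only [Set.mem_ofPred_eq, Set.mem_iUnion]
    constructor
    · intro h; exact ⟨seg Z n, ⟨by simp, h⟩, cyl_seg Z n⟩
    · rintro ⟨x, ⟨h1, h2⟩, h3⟩
      rw [mem_cyl_of_length h1] at h3; rw [h3]; exact h2
  rw [this]
  exact MeasurableSet.iUnion fun x => MeasurableSet.iUnion fun _ => measurable_cyl x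

theorem measurable_of_seg {β : Type*} [MeasurableSpace β] (F : BStr → β) (n : ℕ) :
    Measurable (fun Z => F (seg Z n)) :=
  fun s _ => measurableSet_seg (fun x => F x ∈ s) n

/-- all binary strings of a given length, as a list -/
def allStr : ℕ → List BStr
  | 0 => [[]]
  | n + 1 => (allStr n).flatMap (fun x => [false :: x, true :: x])

theorem mem_allStr (n : ℕ) (x : BStr) : x ∈ allStr n ↔ x.length = n := by
  induction n generalizing x with
  | zero => simp [allStr]
  | succ n ih =>
    simp only [allStr, List.mem_flatMap, ih]
    cases x with
    | nil => simp
    | cons b x => cases b <;> simp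

theorem allStr_length (n : ℕ) : (allStr n).length = 2 ^ n := by
  induction n with
  | zero => simp [allStr]
  | succ n ih => simp [allStr, List.length_flatMap, ih, pow_succ]

theorem allStr_nodup (n : ℕ) : (allStr n).Nodup := by
  induction n with
  | zero => simp [allStr]
  | succ n ih =>
    rw [allStr, List.nodup_flatMap]
    refine ⟨fun x _ => by simp, ih.imp ?_⟩
    intro a b hab
    simp [Function.onFun, hab.symm]

/-- the finset of strings of length `n` -/
def S (n : ℕ) : Finset BStr := (allStr n).toFinset

@[simp] theorem mem_S {n : ℕ} {x : BStr} : x ∈ S n ↔ x.length = n := by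
  simp [S, mem_allStr]

theorem S_card (n : ℕ) : (S n).card = 2 ^ n := by
  rw [S, List.toFinset_card_of_nodup (allStr_nodup n), allStr_length]

theorem S_zero : S 0 = {[]} := by rfl

theorem sum_S_add {M : Type*} [AddCommMonoid M] (n m : ℕ) (f : BStr → M) :
    ∑ x ∈ S (n + m), f x = ∑ w ∈ S n, ∑ y ∈ S m, f (w ++ y) := by
  rw [← Finset.sum_product']
  refine Finset.sum_bij' (fun x _ => (x.take n, x.drop n)) (fun p _ => p.1 ++ p.2) ?_ ?_ ?_ ?_ ?_
  · intro x hx; simp at hx ⊢; omega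
  · intro p hp; simp at hp ⊢; omega
  · intro x hx; simp
  · intro p hp; simp at hp; simp [← hp.1]
  · intro x hx; simp

theorem sum_S_fin {M : Type*} [AddCommMonoid M] (n : ℕ) (f : BStr → M) :
    ∑ v : Fin n → Bool, f (List.ofFn v) = ∑ x ∈ S n, f x := by
  refine Finset.sum_bij (fun v _ => List.ofFn v) ?_ ?_ ?_ ?_
  · intro v _; simp
  · intro v _ w _ h; exact List.ofFn_injective h
  · intro x hx; simp at hx; subst hx; exact ⟨fun i => x.get i, Finset.mem_univ _, by simp⟩
  · intro v _; rfl

variable (ρ : Measure Cantor) [IsProbabilityMeasure ρ]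

theorem integral_seg (n : ℕ) (F : BStr → ℝ) :
    ∫ Z, F (seg Z n) ∂ρ = ∑ x ∈ S n, ρ.real (cyl x) * F x := by
  have h : ∀ Z, F (seg Z n) = ∑ x ∈ S n, (cyl x).indicator (fun _ => F x) Z := by
    intro Z
    rw [Finset.sum_eq_single (seg Z n)]
    · rw [Set.indicator_of_mem (cyl_seg Z n)]
    · intro x hx hne
      rw [Set.indicator_of_notMem]
      rw [mem_cyl_of_length (mem_S.1 hx)]; exact Ne.symm hne
    · intro h; simp at h
  simp_rw [h]
  rw [integral_finsetSum]
  · refine Finset.sum_congr rfl fun x _ => ?_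
    rw [integral_indicator_const _ (measurable_cyl x)]; simp
  · intro x _
    exact (integrable_const _).indicator (measurable_cyl x)

theorem integrable_seg (n : ℕ) (F : BStr → ℝ) : Integrable (fun Z => F (seg Z n)) ρ := by
  refine Integrable.of_bound (C := ∑ x ∈ S n, |F x|) (measurable_of_seg F n).aestronglyMeasurable ?_
  refine ae_of_all _ fun Z => ?_
  rw [Real.norm_eq_abs]
  exact Finset.single_le_sum (f := fun x => |F x|) (fun _ _ => abs_nonneg _) (by simp)

open Classical in
theorem meas_seg (n : ℕ) (p : BStr → Prop) :
    ρ.real {Z | p (seg Z n)} = ∑ x ∈ (S n).filter p, ρ.real (cyl x) := by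
  have := integral_seg ρ n (fun x => if p x then 1 else 0)
  have h2 : (fun Z => (if p (seg Z n) then (1:ℝ) else 0)) = {Z | p (seg Z n)}.indicator (fun _ => 1) := by
    ext Z; simp [Set.indicator_apply]
  rw [h2, integral_indicator_const _ (measurableSet_seg p n)] at this
  simp only [smul_eq_mul, mul_one, mul_ite, mul_zero] at this
  rw [this, Finset.sum_filter]

theorem sum_S_one (n : ℕ) : ∑ x ∈ S n, ρ.real (cyl x) = 1 := by
  have := integral_seg ρ n (fun _ => 1)
  simp at this; exact this.symm

theorem cyl_append (x : BStr) (m : ℕ) : ∑ y ∈ S m, ρ.real (cyl (x ++ y)) = ρ.real (cyl x) := by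
  have h1 : cyl x = {Z | (seg Z (x.length + m)).take x.length = x} := by
    ext Z; rw [mem_cyl_iff, Set.mem_ofPred_eq, seg_take' _ (by omega)]
  conv_rhs => rw [h1]
  rw [meas_seg ρ (x.length + m) (fun z => z.take x.length = x), Finset.sum_filter, sum_S_add]
  symm
  rw [Finset.sum_eq_single x]
  · simp
  · intro b hb hne
    refine Finset.sum_eq_zero fun y _ => ?_
    simp at hb
    rw [if_neg]; rw [List.take_left' hb]; exact hne
  · intro h; simp at h

variable {ρ}

theorem inv_meas (hmp : MeasurePreserving shift ρ ρ) (k : ℕ) {E : Set Cantor} (hE : MeasurableSet E) :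
    ρ.real (shift^[k] ⁻¹' E) = ρ.real E := by
  unfold Measure.real
  rw [(hmp.iterate k).measure_preimage hE.nullMeasurableSet]

theorem cyl_prepend (hmp : MeasurePreserving shift ρ ρ) (x : BStr) (m : ℕ) :
    ∑ y ∈ S m, ρ.real (cyl (y ++ x)) = ρ.real (cyl x) := by
  rw [← inv_meas hmp m (measurable_cyl x)]
  have h1 : shift^[m] ⁻¹' cyl x = {Z | (seg Z (m + x.length)).drop m = x} := by
    ext Z; rw [Set.mem_preimage, mem_cyl_iff, Set.mem_ofPred_eq, seg_drop]; simp
  rw [h1, meas_seg ρ (m + x.length) (fun z => z.drop m = x), Finset.sum_filter, sum_S_add]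
  refine Finset.sum_congr rfl fun y hy => ?_
  simp at hy
  rw [Finset.sum_eq_single x]
  · simp [List.drop_left' hy]
  · intro b hb hne
    rw [if_neg]; rw [List.drop_left' hy]; exact hne
  · intro h; simp at h

theorem cyl_le_drop (hmp : MeasurePreserving shift ρ ρ) (Z : Cantor) (k n : ℕ) :
    ρ.real (cyl (seg Z (k + n))) ≤ ρ.real (cyl (seg (shift^[k] Z) n)) := by
  rw [← cyl_prepend hmp (seg (shift^[k] Z) n) k, seg_add]
  exact Finset.single_le_sum (f := fun y => ρ.real (cyl (y ++ seg (shift^[k] Z) n))) (fun _ _ => measureReal_nonneg) (by simp)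

end Basics


section CompTools
variable {α : Type*} [Primcodable α]

theorem c_bin {f : ℕ → ℕ → ℕ} (hf : Primrec₂ f) {g h : α → ℕ} (hg : Computable g) (hh : Computable h) :
    Computable (fun a => f (g a) (h a)) :=
  (hf.to_comp).comp hg hh

theorem c_add {g h : α → ℕ} (hg : Computable g) (hh : Computable h) : Computable (fun a => g a + h a) :=
  c_bin Primrec.nat_add hg hh
theorem c_sub {g h : α → ℕ} (hg : Computable g) (hh : Computable h) : Computable (fun a => g a - h a) :=
  c_bin Primrec.nat_sub hg hh
theorem c_mul {g h : α → ℕ} (hg : Computable g) (hh : Computable h) : Computable (fun a => g a * h a) :=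
  c_bin Primrec.nat_mul hg hh
theorem c_pow {g h : α → ℕ} (hg : Computable g) (hh : Computable h) : Computable (fun a => g a ^ h a) :=
  c_bin pow_prim hg hh

theorem c_lt {g h : α → ℕ} (hg : Computable g) (hh : Computable h) :
    Computable (fun a => decide (g a < h a)) := by
  have : Primrec (fun p : ℕ × ℕ => decide (p.1 < p.2)) :=
    primrecPred_iff_primrec_decide.1 (Primrec.nat_lt.comp Primrec.fst Primrec.snd)
  exact this.to_comp.comp (hg.pair hh)

theorem c_le {g h : α → ℕ} (hg : Computable g) (hh : Computable h) :
    Computable (fun a => decide (g a ≤ h a)) := by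
  have : Primrec (fun p : ℕ × ℕ => decide (p.1 ≤ p.2)) :=
    primrecPred_iff_primrec_decide.1 (Primrec.nat_le.comp Primrec.fst Primrec.snd)
  exact this.to_comp.comp (hg.pair hh)

theorem c_eq {β : Type*} [Primcodable β] [DecidableEq β] {g h : α → β} (hg : Computable g) (hh : Computable h) :
    Computable (fun a => decide (g a = h a)) := by
  have : Primrec (fun p : β × β => decide (p.1 = p.2)) :=
    primrecPred_iff_primrec_decide.1 (Primrec.eq.comp Primrec.fst Primrec.snd)
  exact this.to_comp.comp (hg.pair hh)

theorem c_and {g h : α → Bool} (hg : Computable g) (hh : Computable h) : Computable (fun a => g a && h a) :=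
  Primrec.and.to_comp.comp hg hh
theorem c_or {g h : α → Bool} (hg : Computable g) (hh : Computable h) : Computable (fun a => g a || h a) :=
  Primrec.or.to_comp.comp hg hh
theorem c_not {g : α → Bool} (hg : Computable g) : Computable (fun a => !g a) :=
  Primrec.not.to_comp.comp hg

theorem c_sum {f : α → ℕ → ℕ} (hf : Computable₂ f) {g : α → ℕ} (hg : Computable g) :
    Computable (fun a => ∑ j ∈ Finset.range (g a), f a j) := by
  have := Computable.nat_rec (f := g) (g := fun _ => 0) (h := fun a p => p.2 + f a p.1) hg (Computable.const 0)
    (c_add (Computable.snd.comp Computable.snd) (hf.comp Computable.fst (Computable.fst.comp Computable.snd)))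
  refine this.of_eq fun a => ?_
  induction g a with
  | zero => simp
  | succ n ih => rw [Finset.sum_range_succ, ← ih]

theorem c_ite {β : Type*} [Primcodable β] {c : α → Bool} {f g : α → β} (hc : Computable c) (hf : Computable f)
    (hg : Computable g) : Computable (fun a => if c a then f a else g a) :=
  (Computable.cond hc hf hg).of_eq fun a => by cases c a <;> rfl

theorem c_all {p : α → ℕ → Bool} (hp : Computable₂ p) {g : α → ℕ} (hg : Computable g) :
    Computable (fun a => decide (∀ j < g a, p a j)) := by
  have h1 : Computable₂ (fun a j => if p a j then 0 else 1) := c_ite hp (.const 0) (.const 1)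
  refine (c_eq (c_sum h1 hg) (Computable.const 0)).of_eq fun a => ?_
  simp

theorem c_any {p : α → ℕ → Bool} (hp : Computable₂ p) {g : α → ℕ} (hg : Computable g) :
    Computable (fun a => decide (∃ j < g a, p a j)) := by
  refine (c_not (c_all (p := fun a j => !p a j) (c_not hp) hg)).of_eq fun a => ?_
  rw [Bool.eq_iff_iff]; simp

theorem c_search {p : α → ℕ → Bool} (hp : Computable₂ p) (h : ∀ a, ∃ n, p a n) :
    ∃ f : α → ℕ, Computable f ∧ ∀ a, p a (f a) := by
  have h2 : Partrec₂ (fun a n => (Part.some (p a n) : Part Bool)) := hp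
  have h3 := Partrec.rfind h2
  refine ⟨fun a => Nat.find (h a), Partrec.of_eq_tot h3 fun a => ?_, fun a => Nat.find_spec (h a)⟩
  refine Nat.mem_rfind.2 ⟨?_, ?_⟩
  · exact Part.mem_some_iff.2 (Nat.find_spec (h a)).symm
  · intro m hm
    refine Part.mem_some_iff.2 ?_
    have := Nat.find_min (h a) hm
    simpa using this

theorem c_tail {f : α → BStr} (hf : Computable f) : Computable (fun a => (f a).tail) :=
  Primrec.list_tail.to_comp.comp hf

theorem c_drop {f : α → BStr} {g : α → ℕ} (hf : Computable f) (hg : Computable g) :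
    Computable (fun a => (f a).drop (g a)) :=
  Primrec.list_drop.to_comp.comp hg hf

theorem c_take {f : α → BStr} {g : α → ℕ} (hf : Computable f) (hg : Computable g) :
    Computable (fun a => (f a).take (g a)) :=
  Primrec.list_take.to_comp.comp hg hf

theorem c_len {f : α → BStr} (hf : Computable f) : Computable (fun a => (f a).length) :=
  Computable.list_length.comp hf

theorem c_allStr : Computable allStr := by
  have : Primrec allStr := by
    have h1 : Primrec (fun l : List BStr => l.flatMap (fun x => [false :: x, true :: x])) := by
      refine Primrec.list_flatMap Primrec.id ?_
      refine Primrec.list_cons.comp (Primrec.list_cons.comp (.const false) .snd)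
        (Primrec.list_cons.comp (Primrec.list_cons.comp (.const true) .snd) (.const []))
    have h2 : Primrec₂ (fun (_ : ℕ) (l : List BStr) => l.flatMap (fun x => [false :: x, true :: x])) :=
      h1.comp Primrec.snd
    have := Primrec.nat_rec₁ ([[]] : List BStr) h2
    refine this.of_eq fun n => ?_
    induction n with
    | zero => rfl
    | succ n ih => rw [allStr, ← ih]
  exact this.to_comp

theorem c_getD {β : Type*} [Primcodable β] {f : α → List β} {g : α → ℕ} (d : β) (hf : Computable f) (hg : Computable g) :
    Computable (fun a => (f a).getD (g a) d) := by
  have h := Computable.list_getElem?.comp hf hg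
  refine (Computable.option_getD h (.const d)).of_eq fun a => ?_
  simp [List.getD_eq_getElem?_getD]

theorem c_sumS {f : α → BStr → ℕ} (hf : Computable₂ f) {g : α → ℕ} (hg : Computable g) :
    Computable (fun a => ∑ x ∈ S (g a), f a x) := by
  have h1 : Computable₂ (fun a j => f a ((allStr (g a)).getD j [])) :=
    hf.comp Computable.fst (c_getD [] (c_allStr.comp (hg.comp Computable.fst)) Computable.snd)
  refine (c_sum h1 (c_pow (Computable.const 2) hg)).of_eq fun a => ?_
  rw [S, List.sum_toFinset _ (allStr_nodup _), ← allStr_length, Finset.sum_range, ← List.sum_ofFn]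
  congr 1
  apply List.ext_getElem
  · simp
  · intro i h1 h2
    simp

/-- the prefix test -/
theorem c_isPre {f g : α → BStr} (hf : Computable f) (hg : Computable g) :
    Computable (fun a => decide ((g a).take (f a).length = f a)) :=
  c_eq (c_take hg (c_len hf)) hf

end CompTools


set_option linter.unusedSectionVars false
section TestSec

structure GoodM (ρ : Measure Cantor) (D : ℕ) : Prop where
  comp : ComputableMeasure ρ
  erg : Ergodic shift ρ
  low : ∀ x, 1 ≤ (2:ℝ) ^ (D * x.length) * ρ.real (cyl x)

variable {ρ : Measure Cantor} [IsProbabilityMeasure ρ] {D : ℕ}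

theorem GoodM.mp (h : GoodM ρ D) : MeasurePreserving shift ρ ρ := h.erg.toMeasurePreserving

theorem GoodM.pos (h : GoodM ρ D) (x : BStr) : 0 < ρ.real (cyl x) := by
  have h1 := h.low x
  by_contra h0
  have : ρ.real (cyl x) = 0 := le_antisymm (not_lt.1 h0) measureReal_nonneg
  rw [this] at h1; simp at h1; linarith

theorem GoodM.approx (h : GoodM ρ D) : ∃ a : BStr → ℕ → ℕ, Computable₂ a ∧
    ∀ x k, |(a x k : ℝ) - 2 ^ k * ρ.real (cyl x)| ≤ 2 := by
  obtain ⟨q, hq, hq2⟩ := h.comp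
  refine ⟨fun x k => rfl2 (q x k) k, rfl2_comp.comp (hq) Computable.snd, fun x k => ?_⟩
  have h1 := hq2 x k
  have hp : (0:ℝ) < 2 ^ k := by positivity
  have h2 : |(q x k : ℝ) * 2 ^ k - 2 ^ k * ρ.real (cyl x)| ≤ 1 := by
    have : (q x k : ℝ) * 2 ^ k - 2 ^ k * ρ.real (cyl x) = 2 ^ k * ((q x k : ℝ) - (ρ (cyl x)).toReal) := by
      unfold Measure.real; ring
    rw [this, abs_mul, abs_of_pos hp]
    calc _ ≤ (2:ℝ) ^ k * 2⁻¹ ^ k := by gcongr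
      _ = 1 := by rw [← mul_pow]; norm_num
  have h3 : ((⌊q x k * 2 ^ k⌋ : ℤ) : ℝ) = (⌊(q x k : ℝ) * 2 ^ k⌋ : ℤ) := by
    have : (q x k : ℝ) * 2 ^ k = ((q x k * 2 ^ k : ℚ) : ℝ) := by push_cast; rfl
    rw [this, Rat.floor_cast]
  have h4 := Int.floor_le ((q x k : ℝ) * 2 ^ k)
  have h5 := Int.lt_floor_add_one ((q x k : ℝ) * 2 ^ k)
  have h6 : ((rfl2 (q x k) k : ℕ) : ℝ) = max ((⌊q x k * 2 ^ k⌋ : ℤ) : ℝ) 0 := by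
    unfold rfl2
    have : (((⌊q x k * 2 ^ k⌋).toNat : ℕ) : ℝ) = (((⌊q x k * 2 ^ k⌋).toNat : ℤ) : ℝ) := by push_cast; rfl
    rw [this, Int.toNat_eq_max]; push_cast; rfl
  have h7 : 0 ≤ 2 ^ k * ρ.real (cyl x) := by positivity
  rw [h6, h3]
  rw [abs_le] at h2 ⊢
  constructor
  · have := le_max_left ((⌊(q x k : ℝ) * 2 ^ k⌋ : ℤ) : ℝ) 0
    linarith
  · rcases max_cases ((⌊(q x k : ℝ) * 2 ^ k⌋ : ℤ) : ℝ) 0 with h | h <;> rw [h.1] <;> linarith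

theorem GoodM.mult (h : GoodM ρ D) : ∃ A : BStr → ℕ, Computable A ∧
    ∀ x, (2:ℝ) ^ (D * x.length + 3) * ρ.real (cyl x) ≤ 2 * A x ∧
      (A x : ℝ) ≤ 2 * (2 ^ (D * x.length + 3) * ρ.real (cyl x)) := by
  obtain ⟨a, ha, ha2⟩ := h.approx
  refine ⟨fun x => a x (D * x.length + 3), ha.comp Computable.id ?_, fun x => ?_⟩
  · exact c_add (c_mul (.const D) (c_len .id)) (.const 3)
  · have h1 := h.low x
    have h2 := ha2 x (D * x.length + 3)
    have : (2:ℝ) ^ (D * x.length + 3) * ρ.real (cyl x) = 8 * (2 ^ (D * x.length) * ρ.real (cyl x)) := by ring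
    rw [abs_le] at h2
    constructor <;> linarith

theorem zero_null (h : GoodM ρ D) : ρ {fun _ => false} = 0 := by
  have hms : MeasurableSet ({fun _ => false} : Set Cantor) := MeasurableSet.singleton _
  have h1 := h.erg.ae_empty_or_univ_of_ae_le_preimage (s := {fun _ => false}) hms.nullMeasurableSet
    (by
      refine LE.le.eventuallyLE ?_
      intro Z hZ; simp at hZ; subst hZ; simp; rfl)
  rcases h1 with h1 | h1
  · rw [measure_congr h1]; simp
  · exfalso
    have h2 : ρ.real (cyl [true]) = 0 := by
      unfold Measure.real
      have : ρ (cyl [true]) ≤ ρ ({fun _ => false} : Set Cantor)ᶜ := by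
        refine measure_mono ?_
        intro Z hZ hZ2
        simp at hZ2; subst hZ2
        have := hZ ⟨0, by simp⟩
        simp at this
      have h3 : ρ ({fun _ => false} : Set Cantor)ᶜ = 0 := by
        rw [measure_congr h1.compl]; simp
      rw [h3] at this; simp at this; simp [this]
    have := h.pos [true]; linarith

theorem numStr_comp : Computable numStr := by
  have h2 : Primrec₂ (fun (_ : ℕ) (l : BStr) => false :: l) :=
    Primrec.list_cons.comp (.const false) Primrec.snd
  refine (Primrec.nat_rec₁ ([] : BStr) h2).to_comp.of_eq fun n => ?_
  induction n with
  | zero => rfl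
  | succ n ih => simp [numStr, List.replicate_succ]; exact ih

theorem dummy (h : GoodM ρ D) : ∃ d : ℕ → ℕ, Computable d ∧ ∀ m, ρ.real (cyl (numStr (d m))) ≤ 2⁻¹ ^ m := by
  obtain ⟨a, ha, ha2⟩ := h.approx
  have hc : Computable₂ (fun m n => decide (a (numStr n) (m + 3) < 6)) := by
    exact c_lt (ha.comp (numStr_comp.comp .snd) (c_add .fst (.const 3))) (.const 6)
  obtain ⟨d, hd, hd2⟩ := c_search hc (by
    intro m
    have hanti : Antitone (fun n => cyl (numStr n)) := by
      intro i j hij Z hZ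
      rw [mem_cyl_iff] at *
      simp only [numStr, List.length_replicate] at *
      rw [← seg_take' Z hij, hZ]; simp [hij]
    have hinter0 : ⋂ n, cyl (numStr n) = {fun _ => false} := by
      ext Z; simp only [Set.mem_iInter, Set.mem_singleton_iff]
      constructor
      · intro hZ; funext i
        have := hZ (i+1) ⟨i, by simp [numStr]⟩
        simpa [numStr] using this
      · rintro rfl n i; rw [List.get_eq_getElem]; simp [numStr]
    have ht := tendsto_measure_iInter_atTop (μ := ρ) (fun n => (measurable_cyl (numStr n)).nullMeasurableSet) hanti ⟨0, measure_ne_top _ _⟩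
    rw [hinter0, zero_null h] at ht
    have ht2 : Tendsto (fun n => ρ.real (cyl (numStr n))) atTop (nhds 0) := by
      have := (ENNReal.tendsto_toReal (ENNReal.zero_ne_top)).comp ht
      rw [ENNReal.toReal_zero] at this; exact this
    obtain ⟨n, hn⟩ := (ht2.eventually (gt_mem_nhds (show (0:ℝ) < 2⁻¹ ^ (m+3) by positivity))).exists
    refine ⟨n, ?_⟩
    simp only [decide_eq_true_eq]
    have h2 := ha2 (numStr n) (m+3)
    rw [abs_le] at h2
    have h3 : (2:ℝ) ^ (m+3) * ρ.real (cyl (numStr n)) ≤ 1 := by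
      calc _ ≤ (2:ℝ) ^ (m+3) * 2⁻¹ ^ (m+3) := by gcongr
        _ = 1 := by rw [← mul_pow]; norm_num
    have : (a (numStr n) (m+3) : ℝ) < 6 := by linarith
    exact_mod_cast this)
  refine ⟨d, hd, fun m => ?_⟩
  have h1 := hd2 m
  simp only [decide_eq_true_eq] at h1
  have h2 := ha2 (numStr (d m)) (m+3)
  rw [abs_le] at h2
  have h3 : (a (numStr (d m)) (m+3) : ℝ) < 6 := by exact_mod_cast h1
  have h4 : (2:ℝ) ^ (m+3) * ρ.real (cyl (numStr (d m))) ≤ 8 := by linarith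
  rw [inv_pow, ← one_div, le_div_iff₀ (by positivity)]
  rw [pow_add] at h4; nlinarith

theorem ml_test (h : GoodM ρ D) {μ : Measure Cantor} (hμ : MLAC μ ρ) (p : ℕ → BStr → Bool) (hp : Computable₂ p)
    (hm : ∀ m, ρ.real {Z | ∃ n, p m (seg Z n)} ≤ 2⁻¹ ^ m) : ∀ᵐ Z ∂μ, ∃ m, ∀ n, ¬ p m (seg Z n) := by
  obtain ⟨d, hd, hd2⟩ := dummy h
  let dec : ℕ → BStr := fun i => ((Encodable.decode i : Option BStr)).getD []
  have hdec : Computable dec := Computable.option_getD Computable.decode (.const [])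
  let σ : ℕ → ℕ → BStr := fun m i => if p (m+1) (dec i) then dec i else numStr (d (m+1))
  have hσ : Computable₂ σ := by
    refine c_ite (α := ℕ × ℕ) (c := fun q => p (q.1+1) (dec q.2)) (f := fun q => dec q.2) (g := fun q => numStr (d (q.1+1))) ?_ ?_ ?_
    · exact hp.comp (c_add .fst (.const 1)) (hdec.comp .snd)
    · exact hdec.comp .snd
    · exact numStr_comp.comp (hd.comp (c_add .fst (.const 1)))
  have hT : IsMLTest ρ (fun m => ⋃ i, cyl (σ m i)) := by
    refine ⟨⟨σ, hσ, fun m => rfl⟩, fun m => ?_⟩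
    have hsub : (⋃ i, cyl (σ m i)) ⊆ {Z | ∃ n, p (m+1) (seg Z n)} ∪ cyl (numStr (d (m+1))) := by
      intro Z hZ
      simp only [Set.mem_iUnion] at hZ
      obtain ⟨i, hi⟩ := hZ
      by_cases hc : p (m+1) (dec i)
      · left
        have : σ m i = dec i := by simp [σ, hc]
        rw [this, mem_cyl_iff] at hi
        refine ⟨(dec i).length, ?_⟩
        rw [hi]; exact hc
      · right
        have : σ m i = numStr (d (m+1)) := by simp [σ, hc]
        rw [this] at hi; exact hi
    have h1 : ρ.real (⋃ i, cyl (σ m i)) ≤ 2⁻¹ ^ m := by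
      calc _ ≤ ρ.real ({Z | ∃ n, p (m+1) (seg Z n)} ∪ cyl (numStr (d (m+1)))) := measureReal_mono hsub
        _ ≤ _ := measureReal_union_le _ _
        _ ≤ 2⁻¹ ^ (m+1) + 2⁻¹ ^ (m+1) := add_le_add (hm _) (hd2 _)
        _ = _ := by rw [pow_succ]; ring
    rw [← ENNReal.toReal_le_toReal (measure_ne_top _ _) (by simp)]
    rw [ENNReal.toReal_pow, ENNReal.toReal_inv]; exact h1
  have h0 := hμ _ hT
  rw [ae_iff]
  refine le_antisymm ?_ (zero_le)
  rw [← h0]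
  refine le_iInf fun m => measure_mono ?_
  intro Z hZ
  simp only [not_exists, not_forall, not_not, Set.mem_ofPred_eq] at hZ
  obtain ⟨n, hn⟩ := hZ (m+1)
  simp only [Set.mem_iUnion]
  refine ⟨Encodable.encode (seg Z n), ?_⟩
  have : dec (Encodable.encode (seg Z n)) = seg Z n := by simp [dec]
  have : σ m (Encodable.encode (seg Z n)) = seg Z n := by
    simp only [σ, this]; rw [if_pos hn]
  rw [this]; exact cyl_seg Z n

theorem mlac_self : MLAC ρ ρ := by
  intro G hG
  refine le_antisymm ?_ (zero_le)
  have : Tendsto (fun m : ℕ => (2 : ENNReal)⁻¹ ^ m) atTop (nhds 0) :=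
    ENNReal.tendsto_pow_atTop_nhds_zero_of_lt_one (by simp)
  refine ge_of_tendsto' this fun m => ?_
  exact (iInf_le _ m).trans (hG.2 m)

end TestSec

set_option linter.unusedSectionVars false
section MeanErg
variable {ρ : Measure Cantor} [IsProbabilityMeasure ρ]

theorem mean_ergodic (herg : Ergodic shift ρ) {f : Cantor → ℝ} (hfm : Measurable f) (C : ℝ) (hfb : ∀ Z, |f Z| ≤ C) :
    Tendsto (fun N : ℕ => ∫ Z, |(N : ℝ)⁻¹ * ∑ i ∈ Finset.range N, f (shift^[i] Z) - ∫ Y, f Y ∂ρ| ∂ρ)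
      atTop (nhds 0) := by
  have hmp := herg.toMeasurePreserving
  have hf : MemLp f 2 ρ := MemLp.of_bound hfm.aestronglyMeasurable C (ae_of_all _ fun Z => hfb Z)
  let U : Lp ℝ 2 ρ →L[ℝ] Lp ℝ 2 ρ := (Lp.compMeasurePreservingₗᵢ ℝ shift hmp).toContinuousLinearMap
  have hU : ‖U‖ ≤ 1 := LinearIsometry.norm_toContinuousLinearMap_le _
  have hlim := ContinuousLinearMap.tendsto_birkhoffAverage_orthogonalProjection U hU (hf.toLp f)
  set G := (U.eqLocus (1 : Lp ℝ 2 ρ →L[ℝ] Lp ℝ 2 ρ)).orthogonalProjectionOnto (hf.toLp f) with hG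
  have hfix : U (G : Lp ℝ 2 ρ) = G := G.2
  obtain ⟨c, hc⟩ : ∃ c, (G : Lp ℝ 2 ρ) =ᵐ[ρ] Function.const Cantor c := by
    refine herg.ae_eq_const_of_ae_eq_comp_ae (Lp.aestronglyMeasurable _) ?_
    have h1 := Lp.coeFn_compMeasurePreserving (G : Lp ℝ 2 ρ) hmp
    have h2 : Lp.compMeasurePreserving shift hmp (G : Lp ℝ 2 ρ) = G := hfix
    rw [h2] at h1
    exact h1.symm
  have hiter : ∀ i, (U^[i] (hf.toLp f) : Lp ℝ 2 ρ) =ᵐ[ρ] fun Z => f (shift^[i] Z) := by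
    intro i
    have : (U^[i] (hf.toLp f) : Lp ℝ 2 ρ) = (hf.comp_measurePreserving (hmp.iterate i)).toLp _ := by
      induction i with
      | zero => rfl
      | succ i ih =>
        rw [Function.iterate_succ_apply', ih]; rfl
    rw [this]
    exact MemLp.coeFn_toLp _
  have hsum : ∀ N : ℕ, ((∑ i ∈ Finset.range N, U^[i] (hf.toLp f) : Lp ℝ 2 ρ) : Cantor → ℝ) =ᵐ[ρ]
      fun Z => ∑ i ∈ Finset.range N, f (shift^[i] Z) := by
    intro N
    induction N with
    | zero => simp only [Finset.range_zero, Finset.sum_empty]; exact Lp.coeFn_zero _ _ _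
    | succ N ih =>
      simp only [Finset.sum_range_succ]
      filter_upwards [Lp.coeFn_add (∑ i ∈ Finset.range N, U^[i] (hf.toLp f)) (U^[N] (hf.toLp f)), ih, hiter N] with Z h1 h2 h3
      rw [h1, Pi.add_apply, h2, h3]
  have hB : ∀ N : ℕ, (birkhoffAverage ℝ U _root_.id N (hf.toLp f) : Lp ℝ 2 ρ) =ᵐ[ρ]
      fun Z => (N : ℝ)⁻¹ * ∑ i ∈ Finset.range N, f (shift^[i] Z) := by
    intro N
    simp only [birkhoffAverage, birkhoffSum, _root_.id]
    filter_upwards [Lp.coeFn_smul (N : ℝ)⁻¹ (∑ i ∈ Finset.range N, U^[i] (hf.toLp f)), hsum N] with Z h1 h2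
    rw [h1, Pi.smul_apply, h2, smul_eq_mul]
  have hmeas : ∀ N : ℕ, Measurable (fun Z => (N : ℝ)⁻¹ * ∑ i ∈ Finset.range N, f (shift^[i] Z)) := by
    intro N
    refine Measurable.const_mul ?_ _
    refine Finset.measurable_sum _ fun i _ => hfm.comp (measurable_shift.iterate i)
  have hbd : ∀ i, Integrable (fun Z => f (shift^[i] Z)) ρ := by
    intro i
    exact Integrable.of_bound (hfm.comp (measurable_shift.iterate i)).aestronglyMeasurable C (ae_of_all _ fun Z => hfb _)
  have hinter0 : ∀ N : ℕ, Integrable (fun Z => (N : ℝ)⁻¹ * ∑ i ∈ Finset.range N, f (shift^[i] Z)) ρ := by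
    intro N
    exact (integrable_finsetSum _ fun i _ => hbd i).const_mul _
  have key : ∀ N : ℕ, ∫ Z, |(N : ℝ)⁻¹ * ∑ i ∈ Finset.range N, f (shift^[i] Z) - c| ∂ρ ≤
      ‖birkhoffAverage ℝ U _root_.id N (hf.toLp f) - (G : Lp ℝ 2 ρ)‖ := by
    intro N
    have h1 : ((birkhoffAverage ℝ U _root_.id N (hf.toLp f) - (G : Lp ℝ 2 ρ) : Lp ℝ 2 ρ) : Cantor → ℝ) =ᵐ[ρ]
        fun Z => (N : ℝ)⁻¹ * ∑ i ∈ Finset.range N, f (shift^[i] Z) - c := by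
      filter_upwards [Lp.coeFn_sub (birkhoffAverage ℝ U _root_.id N (hf.toLp f)) (G : Lp ℝ 2 ρ), hB N, hc] with Z h1 h2 h3
      rw [h1, Pi.sub_apply, h2, h3]; rfl
    rw [Lp.norm_def, eLpNorm_congr_ae h1]
    have hi : Integrable (fun Z => (N : ℝ)⁻¹ * ∑ i ∈ Finset.range N, f (shift^[i] Z) - c) ρ := (hinter0 N).sub (integrable_const c)
    have h2 := eLpNorm_le_eLpNorm_of_exponent_le (p := 1) (q := 2) (by norm_num) (μ := ρ) hi.aestronglyMeasurable
    have h3 : ∫ Z, |(N : ℝ)⁻¹ * ∑ i ∈ Finset.range N, f (shift^[i] Z) - c| ∂ρ = (eLpNorm (fun Z => (N : ℝ)⁻¹ * ∑ i ∈ Finset.range N, f (shift^[i] Z) - c) 1 ρ).toReal := by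
      rw [eLpNorm_one_eq_lintegral_enorm, ← integral_norm_eq_lintegral_enorm hi.aestronglyMeasurable]; rfl
    rw [h3]
    refine ENNReal.toReal_mono ?_ h2
    rw [← eLpNorm_congr_ae h1]
    exact Lp.eLpNorm_ne_top _
  have hn : Tendsto (fun N => ‖birkhoffAverage ℝ U _root_.id N (hf.toLp f) - (G : Lp ℝ 2 ρ)‖) atTop (nhds 0) :=
    tendsto_iff_norm_sub_tendsto_zero.1 hlim
  have hlim2 : Tendsto (fun N : ℕ => ∫ Z, |(N : ℝ)⁻¹ * ∑ i ∈ Finset.range N, f (shift^[i] Z) - c| ∂ρ) atTop (nhds 0) :=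
    squeeze_zero (fun N => integral_nonneg fun Z => abs_nonneg _) key hn
  have hceq : ∫ Y, f Y ∂ρ = c := by
    have h1 : Tendsto (fun N : ℕ => |∫ Y, f Y ∂ρ - c|) atTop (nhds 0) := by
      refine squeeze_zero' (Eventually.of_forall fun _ => abs_nonneg _) ?_ hlim2
      filter_upwards [eventually_ge_atTop 1] with N hN
      have h2 : ∫ Z, ((N : ℝ)⁻¹ * ∑ i ∈ Finset.range N, f (shift^[i] Z) - c) ∂ρ = ∫ Y, f Y ∂ρ - c := by
        rw [integral_sub (hinter0 N) (integrable_const c), integral_const_mul, integral_finsetSum _ (fun i _ => hbd i)]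
        have : ∀ i, ∫ Z, f (shift^[i] Z) ∂ρ = ∫ Y, f Y ∂ρ := by
          intro i
          have := integral_map (μ := ρ) (φ := shift^[i]) (measurable_shift.iterate i).aemeasurable (f := f) hfm.aestronglyMeasurable
          rw [(hmp.iterate i).map_eq] at this
          exact this.symm
        simp only [this, Finset.sum_const, Finset.card_range, nsmul_eq_mul]
        have hN' : (N:ℝ) ≠ 0 := by positivity
        simp [hN']
      rw [← h2]
      exact abs_integral_le_integral_abs
    have := tendsto_nhds_unique h1 tendsto_const_nhds
    have := abs_eq_zero.1 this.symm
    linarith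
  rw [hceq]; exact hlim2

end MeanErg

set_option linter.unusedSectionVars false
section Kuc
variable {ρ : Measure Cantor} [IsProbabilityMeasure ρ] {D : ℕ}

/-- number of occurrences of `y` at positions below `N` in `x` -/
def cnt (y : BStr) (N : ℕ) (x : BStr) : ℕ :=
  ∑ i ∈ Finset.range N, if decide ((x.drop i).take y.length = y) then 1 else 0

theorem cnt_comp {α : Type*} [Primcodable α] {f h : α → BStr} {g : α → ℕ} (hf : Computable f) (hg : Computable g)
    (hh : Computable h) : Computable (fun a => cnt (f a) (g a) (h a)) := by
  unfold cnt
  refine c_sum (α := α) (f := fun a i => if decide (((h a).drop i).take (f a).length = f a) then 1 else 0) ?_ hg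
  refine c_ite (α := α × ℕ) (c := fun p => decide (((h p.1).drop p.2).take (f p.1).length = f p.1)) ?_ (.const 1) (.const 0)
  exact c_isPre (hf.comp .fst) (c_drop (hh.comp .fst) .snd)

theorem cnt_le (y : BStr) (N : ℕ) (x : BStr) : cnt y N x ≤ N := by
  unfold cnt
  calc _ ≤ ∑ i ∈ Finset.range N, 1 := Finset.sum_le_sum fun i _ => by split_ifs <;> simp
    _ = N := by simp

theorem cnt_seg (y : BStr) (N : ℕ) (Z : Cantor) : (cnt y N (seg Z (N + y.length)) : ℝ) =
    ∑ i ∈ Finset.range N, (cyl y).indicator (fun _ => (1:ℝ)) (shift^[i] Z) := by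
  unfold cnt
  push_cast
  refine Finset.sum_congr rfl fun i hi => ?_
  simp at hi
  rw [seg_drop, seg_take' _ (by omega)]
  by_cases h : seg (shift^[i] Z) y.length = y
  · rw [Set.indicator_of_mem ((mem_cyl_iff _ _).2 h)]; simp [h]
  · rw [Set.indicator_of_notMem (fun h' => h ((mem_cyl_iff _ _).1 h'))]; simp [h]

/-- the `L1` deviation from the mean -/
noncomputable def dev (ρ : Measure Cantor) (y : BStr) (N : ℕ) : ℝ :=
  ∑ x ∈ S (N + y.length), ρ.real (cyl x) * |(N : ℝ)⁻¹ * cnt y N x - ρ.real (cyl y)|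

theorem dev_eq (y : BStr) (N : ℕ) : dev ρ y N =
    ∫ Z, |(N : ℝ)⁻¹ * ∑ i ∈ Finset.range N, (cyl y).indicator (fun _ => (1:ℝ)) (shift^[i] Z) - ρ.real (cyl y)| ∂ρ := by
  unfold dev
  rw [← integral_seg ρ (N + y.length) (fun x => |(N : ℝ)⁻¹ * cnt y N x - ρ.real (cyl y)|)]
  simp_rw [cnt_seg]

theorem dev_tendsto (h : GoodM ρ D) (y : BStr) : Tendsto (fun N => dev ρ y N) atTop (nhds 0) := by
  simp_rw [dev_eq]
  have := mean_ergodic h.erg (f := (cyl y).indicator (fun _ => (1:ℝ))) (measurable_const.indicator (measurable_cyl y)) 1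
    (fun Z => by by_cases hZ : Z ∈ cyl y <;> simp [hZ])
  rw [integral_indicator_const _ (measurable_cyl y)] at this
  simpa using this

def devN (a : BStr → ℕ → ℕ) (y : BStr) (N k : ℕ) : ℕ :=
  ∑ x ∈ S (N + y.length), a x k * ((cnt y N x * 2 ^ k - N * a y k) + (N * a y k - cnt y N x * 2 ^ k))

theorem nat_dist_cast (u v : ℕ) : (((u - v) + (v - u) : ℕ) : ℝ) = |(u:ℝ) - v| := by
  rcases le_total u v with h | h
  · rw [Nat.sub_eq_zero_of_le h, zero_add, Nat.cast_sub h, abs_sub_comm, abs_of_nonneg]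
    simpa using h
  · rw [Nat.sub_eq_zero_of_le h, add_zero, Nat.cast_sub h, abs_of_nonneg]
    simpa using h

theorem devN_approx (a : BStr → ℕ → ℕ) (ha : ∀ x k, |(a x k : ℝ) - 2 ^ k * ρ.real (cyl x)| ≤ 2) (y : BStr) (N k : ℕ)
    (hN : 1 ≤ N) :
    |(devN a y N k : ℝ) - 2 ^ k * 2 ^ k * N * dev ρ y N| ≤ 8 * 2 ^ (N + y.length) * N * 2 ^ k := by
  have hNr : (1:ℝ) ≤ N := by exact_mod_cast hN
  have hk : (1:ℝ) ≤ 2 ^ k := one_le_pow₀ (by norm_num)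
  have e1 : (devN a y N k : ℝ) - 2 ^ k * 2 ^ k * N * dev ρ y N =
      ∑ x ∈ S (N + y.length), ((a x k : ℝ) * |(cnt y N x : ℝ) * 2 ^ k - N * a y k| -
        2 ^ k * 2 ^ k * N * (ρ.real (cyl x) * |(N : ℝ)⁻¹ * cnt y N x - ρ.real (cyl y)|)) := by
    rw [Finset.sum_sub_distrib, ← Finset.mul_sum]
    unfold devN dev
    congr 1
    rw [Nat.cast_sum]
    refine Finset.sum_congr rfl fun x _ => ?_
    rw [Nat.cast_mul, nat_dist_cast]
    push_cast; rfl
  rw [e1]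
  have e2 : ∀ x ∈ S (N + y.length), |((a x k : ℝ) * |(cnt y N x : ℝ) * 2 ^ k - N * a y k| -
        2 ^ k * 2 ^ k * N * (ρ.real (cyl x) * |(N : ℝ)⁻¹ * cnt y N x - ρ.real (cyl y)|))| ≤ 8 * N * 2 ^ k := by
    intro x _
    have hx := ha x k
    have hy := ha y k
    have hρ1 : ρ.real (cyl x) ≤ 1 := measureReal_le_one
    have hρ0 : 0 ≤ ρ.real (cyl x) := measureReal_nonneg
    have hy1 : ρ.real (cyl y) ≤ 1 := measureReal_le_one
    have hy0 : 0 ≤ ρ.real (cyl y) := measureReal_nonneg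
    have hc : (cnt y N x : ℝ) ≤ N := by exact_mod_cast cnt_le y N x
    have hc0 : (0:ℝ) ≤ cnt y N x := by positivity
    set w := |(cnt y N x : ℝ) * 2 ^ k - N * a y k| with hw
    set g := |(N : ℝ)⁻¹ * cnt y N x - ρ.real (cyl y)| with hg
    have hg2 : 2 ^ k * N * g = |(cnt y N x : ℝ) * 2 ^ k - N * (2 ^ k * ρ.real (cyl y))| := by
      rw [hg, ← abs_of_nonneg (show (0:ℝ) ≤ 2 ^ k * N by positivity), ← abs_mul]
      congr 1
      have : (N:ℝ) ≠ 0 := by positivity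
      field_simp
    have hg1 : g ≤ 1 := by
      rw [hg, abs_le]
      have h1 : (N : ℝ)⁻¹ * cnt y N x ≤ 1 := by
        rw [inv_mul_le_iff₀ (by positivity)]; linarith
      have h0 : 0 ≤ (N : ℝ)⁻¹ * cnt y N x := by positivity
      constructor <;> linarith
    have hg0 : 0 ≤ g := abs_nonneg _
    have hwg : |w - 2 ^ k * N * g| ≤ 2 * N := by
      rw [hg2, hw]
      refine (abs_abs_sub_abs_le _ _).trans ?_
      have : (cnt y N x : ℝ) * 2 ^ k - N * a y k - ((cnt y N x : ℝ) * 2 ^ k - N * (2 ^ k * ρ.real (cyl y))) =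
        - (N * (a y k - 2 ^ k * ρ.real (cyl y))) := by ring
      rw [this, abs_neg, abs_mul, abs_of_nonneg (by positivity : (0:ℝ) ≤ N)]
      nlinarith
    have e3 : (a x k : ℝ) * w - 2 ^ k * 2 ^ k * N * (ρ.real (cyl x) * g) =
      ((a x k : ℝ) - 2 ^ k * ρ.real (cyl x)) * w + 2 ^ k * ρ.real (cyl x) * (w - 2 ^ k * N * g) := by ring
    have hw0 : 0 ≤ w := abs_nonneg _
    have hw1 : w ≤ 2 ^ k * N + 2 * N := by
      have := (abs_le.1 hwg).2
      have : 2 ^ k * N * g ≤ 2 ^ k * N * 1 := by gcongr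
      linarith
    rw [e3]
    refine (abs_add_le _ _).trans ?_
    rw [abs_mul, abs_mul, abs_of_nonneg hw0, abs_of_nonneg (show (0:ℝ) ≤ 2 ^ k * ρ.real (cyl x) by positivity)]
    have f1 : |(a x k : ℝ) - 2 ^ k * ρ.real (cyl x)| * w ≤ 2 * (2 ^ k * N + 2 * N) := by gcongr
    have f2 : 2 ^ k * ρ.real (cyl x) * |w - 2 ^ k * N * g| ≤ 2 ^ k * 1 * (2 * N) := by gcongr
    nlinarith
  refine (Finset.abs_sum_le_sum_abs _ _).trans ((Finset.sum_le_sum e2).trans (le_of_eq ?_))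
  rw [Finset.sum_const, S_card]; simp; ring

theorem exists_Nf (h : GoodM ρ D) (c : ℕ) : ∃ Nf : BStr → ℕ, Computable Nf ∧ ∀ y, 1 ≤ Nf y ∧
    dev ρ y (Nf y) ≤ 3 * 2⁻¹ ^ c * ρ.real (cyl y) := by
  obtain ⟨a, ha, ha2⟩ := h.approx
  let kk : BStr → ℕ → ℕ := fun y N => (N + y.length) + (D * y.length + c) + 3
  have hl : Computable (fun p : BStr × ℕ => p.1.length) := c_len .fst
  have hl2 : Computable (fun p : BStr × ℕ => D * p.1.length + c) := c_add (c_mul (.const D) hl) (.const c)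
  have hkk : Computable (fun p : BStr × ℕ => kk p.1 p.2) :=
    c_add (c_add (c_add .snd hl) hl2) (.const 3)
  have hdev : Computable (fun p : BStr × ℕ => devN a p.1 p.2 (kk p.1 p.2)) := by
    unfold devN
    refine c_sumS (α := BStr × ℕ) (f := fun p x => a x (kk p.1 p.2) * ((cnt p.1 p.2 x * 2 ^ (kk p.1 p.2) - p.2 * a p.1 (kk p.1 p.2)) + (p.2 * a p.1 (kk p.1 p.2) - cnt p.1 p.2 x * 2 ^ (kk p.1 p.2)))) ?_ (c_add .snd hl)
    have k1 : Computable (fun q : (BStr × ℕ) × BStr => kk q.1.1 q.1.2) := hkk.comp .fst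
    have k2 : Computable (fun q : (BStr × ℕ) × BStr => a q.2 (kk q.1.1 q.1.2)) := ha.comp .snd k1
    have k3 : Computable (fun q : (BStr × ℕ) × BStr => q.1.2 * a q.1.1 (kk q.1.1 q.1.2)) :=
      c_mul (Computable.snd.comp .fst) (ha.comp (Computable.fst.comp .fst) k1)
    have k4 : Computable (fun q : (BStr × ℕ) × BStr => cnt q.1.1 q.1.2 q.2 * 2 ^ kk q.1.1 q.1.2) :=
      c_mul (cnt_comp (Computable.fst.comp .fst) (Computable.snd.comp .fst) .snd) (c_pow (.const 2) k1)
    exact c_mul k2 (c_add (c_sub k4 k3) (c_sub k3 k4))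
  have hp : Computable₂ (fun (y : BStr) (N : ℕ) => decide (1 ≤ N) &&
      decide (devN a y N (kk y N) * 2 ^ (D * y.length + c) ≤ 2 * (2 ^ (kk y N) * 2 ^ (kk y N) * N))) := by
    refine c_and (α := BStr × ℕ) (c_le (.const 1) .snd) (c_le (c_mul hdev (c_pow (.const 2) hl2)) ?_)
    exact c_mul (.const 2) (c_mul (c_mul (c_pow (.const 2) hkk) (c_pow (.const 2) hkk)) .snd)
  have key : ∀ y N, 1 ≤ N → |(devN a y N (kk y N) : ℝ) * 2 ^ (D * y.length + c) -
      2 ^ (kk y N) * 2 ^ (kk y N) * N * (2 ^ (D * y.length + c) * dev ρ y N)| ≤ 2 ^ (kk y N) * 2 ^ (kk y N) * N := by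
    intro y N hN
    have h1 := devN_approx a ha2 y N (kk y N) hN
    have h2 : (devN a y N (kk y N) : ℝ) * 2 ^ (D * y.length + c) -
      2 ^ (kk y N) * 2 ^ (kk y N) * N * (2 ^ (D * y.length + c) * dev ρ y N) =
      ((devN a y N (kk y N) : ℝ) - 2 ^ (kk y N) * 2 ^ (kk y N) * N * dev ρ y N) * 2 ^ (D * y.length + c) := by ring
    rw [h2, abs_mul, abs_of_nonneg (show (0:ℝ) ≤ 2 ^ (D * y.length + c) by positivity)]
    calc _ ≤ (8:ℝ) * 2 ^ (N + y.length) * N * 2 ^ (kk y N) * 2 ^ (D * y.length + c) := by gcongr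
      _ = 2 ^ (kk y N) * (2 ^ (N + y.length) * 2 ^ (D * y.length + c) * 2 ^ 3) * N := by ring
      _ = _ := by rw [← pow_add, ← pow_add]
  obtain ⟨Nf, hNf, hNf2⟩ := c_search hp (by
    intro y
    have ht := (dev_tendsto h y).eventually (gt_mem_nhds (show (0:ℝ) < 2⁻¹ ^ (D * y.length + c) by positivity))
    obtain ⟨N, hN1, hN⟩ := ((eventually_ge_atTop 1).and ht).exists
    refine ⟨N, ?_⟩
    simp only [Bool.and_eq_true, decide_eq_true_eq]
    refine ⟨hN1, ?_⟩
    have h1 := (abs_le.1 (key y N hN1)).2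
    have h2 : 2 ^ (D * y.length + c) * dev ρ y N ≤ 1 := by
      calc _ ≤ (2:ℝ) ^ (D * y.length + c) * 2⁻¹ ^ (D * y.length + c) := by gcongr
        _ = 1 := by rw [← mul_pow]; norm_num
    have h3 : (2:ℝ) ^ (kk y N) * 2 ^ (kk y N) * N * (2 ^ (D * y.length + c) * dev ρ y N) ≤ 2 ^ (kk y N) * 2 ^ (kk y N) * N * 1 := by gcongr
    have h4 : (devN a y N (kk y N) : ℝ) * 2 ^ (D * y.length + c) ≤ 2 * (2 ^ (kk y N) * 2 ^ (kk y N) * N) := by linarith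
    exact_mod_cast h4)
  refine ⟨Nf, hNf, fun y => ?_⟩
  have h0 := hNf2 y
  simp only [Bool.and_eq_true, decide_eq_true_eq] at h0
  refine ⟨h0.1, ?_⟩
  have h1 := (abs_le.1 (key y (Nf y) h0.1)).1
  have h2 : (devN a y (Nf y) (kk y (Nf y)) : ℝ) * 2 ^ (D * y.length + c) ≤ 2 * (2 ^ (kk y (Nf y)) * 2 ^ (kk y (Nf y)) * (Nf y)) := by
    exact_mod_cast h0.2
  have hpos : (0:ℝ) < 2 ^ (kk y (Nf y)) * 2 ^ (kk y (Nf y)) * (Nf y) := by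
    have : (1:ℝ) ≤ Nf y := by exact_mod_cast h0.1
    positivity
  have h3 : 2 ^ (D * y.length + c) * dev ρ y (Nf y) ≤ 3 := by
    refine le_of_mul_le_mul_left ?_ hpos
    linarith
  have h4 := h.low y
  have h5 : (2:ℝ)⁻¹ ^ c * 2 ^ c = 1 := by rw [← mul_pow]; norm_num
  have hpp : (0:ℝ) < 2 ^ (D * y.length) := by positivity
  refine le_of_mul_le_mul_left ?_ hpp
  have h6 : 2 ^ (D * y.length) * dev ρ y (Nf y) = (2 ^ (D * y.length + c) * dev ρ y (Nf y)) * 2⁻¹ ^ c := by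
    rw [pow_add]; linear_combination (-(2 ^ (D * y.length) * dev ρ y (Nf y))) * h5
  rw [h6]
  calc _ ≤ 3 * 2⁻¹ ^ c * (1:ℝ) := by nlinarith [show (0:ℝ) < 2⁻¹ ^ c by positivity]
    _ ≤ 3 * 2⁻¹ ^ c * (2 ^ (D * y.length) * ρ.real (cyl y)) := by gcongr
    _ = _ := by ring

theorem quasi_indep (h : GoodM ρ D) (y : BStr) (N : ℕ) (hN : 1 ≤ N) {U : Set Cantor} (hU : MeasurableSet U) :
    ρ.real (cyl y ∩ {Z | ∀ i < N, shift^[i] Z ∈ U}) ≤ ρ.real U * ρ.real (cyl y) + dev ρ y N := by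
  set J := cyl y
  have hJ : MeasurableSet J := measurable_cyl y
  set V := shift^[N-1] ⁻¹' U with hV
  have hVm : MeasurableSet V := (measurable_shift.iterate _) hU
  have hNr : (0:ℝ) < N := by exact_mod_cast hN
  -- each term
  have h1 : ∀ j ∈ Finset.range N, ρ.real (J ∩ {Z | ∀ i < N, shift^[i] Z ∈ U}) ≤ ρ.real (shift^[j] ⁻¹' J ∩ V) := by
    intro j hj
    simp at hj
    have e : shift^[j] ⁻¹' J ∩ V = shift^[j] ⁻¹' (J ∩ shift^[N-1-j] ⁻¹' U) := by
      ext Z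
      simp only [hV, Set.mem_inter_iff, Set.mem_preimage, ← Function.iterate_add_apply]
      rw [show N - 1 - j + j = N - 1 by omega]
    rw [e, inv_meas h.mp j (hJ.inter ((measurable_shift.iterate _) hU))]
    refine measureReal_mono ?_
    rintro Z ⟨hz1, hz2⟩
    exact ⟨hz1, hz2 _ (by omega)⟩
  have h2 := Finset.sum_le_sum h1
  rw [Finset.sum_const, Finset.card_range, nsmul_eq_mul] at h2
  set g : Cantor → ℝ := fun Z => (N : ℝ)⁻¹ * ∑ i ∈ Finset.range N, J.indicator (fun _ => (1:ℝ)) (shift^[i] Z) with hg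
  have hinter0 : ∀ i, Integrable (fun Z => J.indicator (fun _ => (1:ℝ)) (shift^[i] Z)) ρ := by
    intro i
    have : (fun Z => J.indicator (fun _ => (1:ℝ)) (shift^[i] Z)) = (shift^[i] ⁻¹' J).indicator (fun _ => (1:ℝ)) := by
      rfl
    rw [this]
    exact (integrable_const _).indicator ((measurable_shift.iterate i) hJ)
  have hgi : Integrable g ρ := (integrable_finsetSum _ fun i _ => hinter0 i).const_mul _
  have h3 : ∑ j ∈ Finset.range N, ρ.real (shift^[j] ⁻¹' J ∩ V) = N * ∫ Z in V, g Z ∂ρ := by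
    rw [hg, integral_const_mul, integral_finsetSum _ (fun i _ => (hinter0 i).integrableOn), ← mul_assoc, mul_inv_cancel₀ hNr.ne', one_mul]
    refine Finset.sum_congr rfl fun j _ => ?_
    have : (fun Z => J.indicator (fun _ => (1:ℝ)) (shift^[j] Z)) = (shift^[j] ⁻¹' J).indicator (fun _ => (1:ℝ)) := by
      rfl
    rw [this, integral_indicator_const _ ((measurable_shift.iterate j) hJ)]
    simp [Measure.real, Measure.restrict_apply ((measurable_shift.iterate j) hJ)]
  have h4 : ∫ Z in V, g Z ∂ρ ≤ ρ.real U * ρ.real J + dev ρ y N := by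
    have e1 : ∫ Z in V, g Z ∂ρ = ∫ Z in V, (g Z - ρ.real J) ∂ρ + ρ.real U * ρ.real J := by
      rw [integral_sub hgi.integrableOn (integrable_const _)]
      simp only [integral_const, smul_eq_mul]
      have : (ρ.restrict V).real Set.univ = ρ.real U := by
        rw [measureReal_restrict_apply MeasurableSet.univ, Set.univ_inter, hV, inv_meas h.mp _ hU]
      rw [this]; ring
    have hi2 : Integrable (fun Z => g Z - ρ.real J) ρ := hgi.sub (integrable_const _)
    have e2 : ∫ Z in V, (g Z - ρ.real J) ∂ρ ≤ dev ρ y N := by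
      rw [dev_eq]
      calc _ ≤ ∫ Z in V, |g Z - ρ.real J| ∂ρ := integral_mono hi2.integrableOn hi2.abs.integrableOn (fun Z => le_abs_self _)
        _ ≤ _ := setIntegral_le_integral hi2.abs (ae_of_all _ fun Z => abs_nonneg _)
    linarith
  rw [h3] at h2
  have h5 := le_of_mul_le_mul_left h2 hNr
  linarith

end Kuc

set_option linter.unusedSectionVars false
section Ents

/-- entry strings of level `m` -/
def Ent (Q : BStr → BStr → Bool) : ℕ → BStr → Prop
  | 0, z => z = []
  | m + 1, z => ∃ t < z.length, Ent Q m (z.take t) ∧ Q (z.take t) z ∧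
      ∀ n < z.length, t < n → ¬ Q (z.take t) (z.take n)

def nx (Q : BStr → BStr → Bool) (z : BStr) (t : ℕ) : ℕ :=
  t + 1 + ∑ j ∈ Finset.range (z.length - t), if decide (∀ j' < j + 1, !Q (z.take t) (z.take (t + 1 + j'))) then 1 else 0

def ent (Q : BStr → BStr → Bool) (z : BStr) (m : ℕ) : ℕ :=
  Nat.rec 0 (fun _ t => nx Q z t) m

theorem ent_comp {Q : BStr → BStr → Bool} (hQ : Computable₂ Q) : Computable₂ (ent Q) := by
  have hnx : Computable₂ (nx Q) := by
    unfold nx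
    have i1 : Computable (fun q : ((BStr × ℕ) × ℕ) × ℕ => q.1.1.1) := Computable.fst.comp (Computable.fst.comp .fst)
    have i2 : Computable (fun q : ((BStr × ℕ) × ℕ) × ℕ => q.1.1.2) := Computable.snd.comp (Computable.fst.comp .fst)
    have h1 : Computable₂ (fun (q : (BStr × ℕ) × ℕ) (j' : ℕ) => !Q (q.1.1.take q.1.2) (q.1.1.take (q.1.2 + 1 + j'))) := by
      refine c_not (α := ((BStr × ℕ) × ℕ) × ℕ) ?_
      exact hQ.comp (c_take i1 i2) (c_take i1 (c_add (c_add i2 (.const 1)) .snd))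
    have h2 := c_all h1 (g := fun q => q.2 + 1) (c_add .snd (.const 1))
    have h3 : Computable₂ (fun (p : BStr × ℕ) (j : ℕ) => if decide (∀ j' < j + 1, !Q (p.1.take p.2) (p.1.take (p.2 + 1 + j'))) then 1 else 0) :=
      c_ite h2 (.const 1) (.const 0)
    have h4 := c_sum h3 (g := fun p => p.1.length - p.2) (c_sub (c_len .fst) .snd)
    exact c_add (c_add .snd (.const 1)) h4
  have := Computable.nat_rec (α := BStr × ℕ) (f := fun p => p.2) (g := fun _ => 0) (h := fun p q => nx Q p.1 q.2) .snd (.const 0)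
    (hnx.comp (Computable.fst.comp .fst) (Computable.snd.comp .snd))
  exact this

theorem count_spec (P : ℕ → Bool) (K : ℕ) :
    let F := ∑ j ∈ Finset.range K, if decide (∀ j' < j + 1, !P j') then 1 else 0
    F ≤ K ∧ (F < K → P F) ∧ ∀ j < F, ¬ P j := by
  induction K with
  | zero => simp
  | succ K ih =>
    intro F
    obtain ⟨h1, h2, h3⟩ := ih
    set F0 := ∑ j ∈ Finset.range K, if decide (∀ j' < j + 1, !P j') then 1 else 0 with hF0
    have hF : F = F0 + if decide (∀ j' < K + 1, !P j') then 1 else 0 := Finset.sum_range_succ _ _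
    by_cases hc : ∀ j' < K + 1, !P j'
    · rw [if_pos (by simpa using hc)] at hF
      have hK : F0 = K := by
        by_contra hne
        have h4 := h2 (by omega)
        have := hc F0 (by omega)
        simp [h4] at this
      refine ⟨by omega, by omega, fun j hj => ?_⟩
      have := hc j (by omega)
      simpa using this
    · rw [if_neg (by simpa using hc), add_zero] at hF
      rw [hF]
      refine ⟨by omega, fun hlt => ?_, h3⟩
      rcases Nat.lt_or_ge F0 K with h | h
      · exact h2 h
      · have hK : F0 = K := by omega
        push Not at hc
        obtain ⟨j, hj, hj2⟩ := hc
        have : j = K := by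
          by_contra hne
          have := h3 j (by omega)
          simp at this hj2
          simp [this] at hj2
        rw [hK, ← this]; simpa using hj2

theorem nx_spec (Q : BStr → BStr → Bool) (z : BStr) (t : ℕ) :
    t < nx Q z t ∧ (nx Q z t ≤ z.length → Q (z.take t) (z.take (nx Q z t))) ∧
    ∀ n, t < n → n < nx Q z t → ¬ Q (z.take t) (z.take n) := by
  obtain ⟨h1, h2, h3⟩ := count_spec (fun j' => Q (z.take t) (z.take (t + 1 + j'))) (z.length - t)
  unfold nx
  set F := ∑ j ∈ Finset.range (z.length - t), if decide (∀ j' < j + 1, !Q (z.take t) (z.take (t + 1 + j'))) then 1 else 0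
  refine ⟨by omega, fun h => h2 (by omega), fun n hn hn2 => ?_⟩
  have := h3 (n - (t+1)) (by omega)
  rwa [show t + 1 + (n - (t+1)) = n by omega] at this

theorem ent_spec (Q : BStr → BStr → Bool) (z : BStr) (m : ℕ) (h : ent Q z m ≤ z.length) :
    Ent Q m (z.take (ent Q z m)) := by
  induction m with
  | zero => simp [ent, Ent]
  | succ m ih =>
    have e : ent Q z (m+1) = nx Q z (ent Q z m) := rfl
    obtain ⟨h1, h2, h3⟩ := nx_spec Q z (ent Q z m)
    rw [← e] at h1 h2 h3
    have hl : (z.take (ent Q z (m+1))).length = ent Q z (m+1) := by simp [h]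
    refine ⟨ent Q z m, by omega, ?_, ?_, ?_⟩
    · rw [List.take_take, min_eq_left h1.le]; exact ih (by omega)
    · rw [List.take_take, min_eq_left h1.le]; exact h2 h
    · intro n hn hn2
      rw [hl] at hn
      rw [List.take_take, min_eq_left h1.le, List.take_take, min_eq_left hn.le]
      exact h3 n hn2 hn

theorem ent_eq (Q : BStr → BStr → Bool) (z : BStr) (m n : ℕ) (hn : n ≤ z.length) (h : Ent Q m (z.take n)) :
    ent Q z m = n := by
  induction m generalizing n with
  | zero =>
    simp only [Ent] at h
    have := congrArg List.length h
    simp at this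
    simp [ent]; rcases this with h | h
    · exact h.symm
    · subst h; simp at hn; exact hn.symm
  | succ m ih =>
    obtain ⟨t, ht, h1, h2, h3⟩ := h
    have hl : (z.take n).length = n := by simp [hn]
    rw [hl] at ht h3
    rw [List.take_take, min_eq_left ht.le] at h1 h2 h3
    have e := ih t (by omega) h1
    have e2 : ent Q z (m+1) = nx Q z t := by rw [← e]; rfl
    obtain ⟨g1, g2, g3⟩ := nx_spec Q z t
    rw [e2]
    rcases lt_trichotomy (nx Q z t) n with hlt | heq | hgt
    · have := h3 _ hlt g1
      rw [List.take_take, min_eq_left hlt.le] at this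
      exact absurd (g2 (by omega)) this
    · exact heq
    · exact absurd h2 (g3 n ht hgt)

end Ents

section LemK
variable {ρ : Measure Cantor} [IsProbabilityMeasure ρ] {D : ℕ}

def uP (P : BStr → Bool) (x : BStr) : Bool := decide (∃ n < x.length + 1, P (x.take n))

theorem uP_comp {P : BStr → Bool} (hP : Computable P) : Computable (uP P) := by
  unfold uP
  refine c_any (α := BStr) (p := fun x n => P (x.take n)) ?_ (c_add (c_len .id) (.const 1))
  exact hP.comp (c_take .fst .snd)

theorem uP_seg (P : BStr → Bool) (Z : Cantor) (k : ℕ) : uP P (seg Z k) ↔ ∃ n ≤ k, P (seg Z n) := by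
  unfold uP
  simp only [decide_eq_true_eq, seg_length]
  constructor
  · rintro ⟨n, hn, h⟩; rw [seg_take' Z (by omega)] at h; exact ⟨n, by omega, h⟩
  · rintro ⟨n, hn, h⟩; refine ⟨n, by omega, ?_⟩; rw [seg_take' Z hn]; exact h

def QP (P : BStr → Bool) (Nf : BStr → ℕ) (y z : BStr) : Bool := decide (∀ i < Nf y, uP P (z.drop i))

theorem QP_comp {P : BStr → Bool} (hP : Computable P) {Nf : BStr → ℕ} (hN : Computable Nf) :
    Computable₂ (QP P Nf) := by
  unfold QP
  refine c_all (α := BStr × BStr) (p := fun q i => uP P (q.2.drop i)) ?_ (hN.comp .fst)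
  exact (uP_comp hP).comp (c_drop (Computable.snd.comp .fst) .snd)

theorem measurable_open (P : BStr → Bool) : MeasurableSet {Z | ∃ n, P (seg Z n)} := by
  have : {Z | ∃ n, P (seg Z n)} = ⋃ n, {Z | P (seg Z n)} := by ext; simp
  rw [this]
  exact MeasurableSet.iUnion fun n => measurableSet_seg (fun x => P x) n

theorem Ent_unique (Q : BStr → BStr → Bool) (m : ℕ) (Z : Cantor) (n n' : ℕ) (h : Ent Q m (seg Z n)) (h' : Ent Q m (seg Z n')) :
    n = n' := by
  have h1 := ent_eq Q (seg Z (max n n')) m n (by simp) (by rw [seg_take' Z (le_max_left _ _)]; exact h)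
  have h2 := ent_eq Q (seg Z (max n n')) m n' (by simp) (by rw [seg_take' Z (le_max_right _ _)]; exact h')
  omega

theorem level_meas (h : GoodM ρ D) (P : BStr → Bool) (Nf : BStr → ℕ) (hNf1 : ∀ y, 1 ≤ Nf y) (c : ℕ)
    (hNf : ∀ y, dev ρ y (Nf y) ≤ 3 * 2⁻¹ ^ c * ρ.real (cyl y)) (m : ℕ) :
    ρ {Z | ∃ n, Ent (QP P Nf) (m+1) (seg Z n)} ≤
      ENNReal.ofReal (ρ.real {Z | ∃ n, P (seg Z n)} + 3 * 2⁻¹ ^ c) * ρ {Z | ∃ n, Ent (QP P Nf) m (seg Z n)} := by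
  set U := {Z | ∃ n, P (seg Z n)} with hUdef
  have hU : MeasurableSet U := measurable_open P
  set θ := ρ.real U + 3 * 2⁻¹ ^ c with hθ
  have hθ0 : 0 ≤ θ := by positivity
  set s : Set BStr := {y | Ent (QP P Nf) m y} with hs
  have e1 : {Z | ∃ n, Ent (QP P Nf) m (seg Z n)} = ⋃ y ∈ s, cyl y := by
    ext Z
    simp only [Set.mem_ofPred_eq, Set.mem_iUnion, hs]
    constructor
    · rintro ⟨n, hn⟩; exact ⟨seg Z n, hn, cyl_seg Z n⟩
    · rintro ⟨y, hy, hZ⟩; rw [mem_cyl_iff] at hZ; exact ⟨y.length, by rw [hZ]; exact hy⟩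
  have e2 : ρ (⋃ y ∈ s, cyl y) = ∑' y : s, ρ (cyl y) := by
    refine measure_biUnion (Set.to_countable s) ?_ (fun y _ => measurable_cyl y)
    intro y hy y' hy' hne
    rw [Function.onFun, Set.disjoint_left]
    intro Z hZ hZ'
    rw [mem_cyl_iff] at hZ hZ'
    have := Ent_unique (QP P Nf) m Z y.length y'.length (by rw [hZ]; exact hy) (by rw [hZ']; exact hy')
    rw [this, hZ'] at hZ
    exact hne hZ.symm
  have e3 : {Z | ∃ n, Ent (QP P Nf) (m+1) (seg Z n)} ⊆ ⋃ y ∈ s, (cyl y ∩ {Z | ∀ i < Nf y, shift^[i] Z ∈ U}) := by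
    rintro Z ⟨n, t, ht, h1, h2, -⟩
    rw [seg_length] at ht
    rw [seg_take' Z ht.le] at h1 h2
    simp only [Set.mem_iUnion]
    refine ⟨seg Z t, h1, cyl_seg Z t, ?_⟩
    intro i hi
    simp only [QP, decide_eq_true_eq] at h2
    have := h2 i hi
    rw [seg_drop, uP_seg] at this
    obtain ⟨k, -, hk⟩ := this
    exact ⟨k, hk⟩
  rw [e1, e2]
  calc _ ≤ ρ (⋃ y ∈ s, (cyl y ∩ {Z | ∀ i < Nf y, shift^[i] Z ∈ U})) := measure_mono e3
    _ ≤ ∑' y : s, ρ (cyl y ∩ {Z | ∀ i < Nf y, shift^[i] Z ∈ U}) := measure_biUnion_le ρ (Set.to_countable s) _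
    _ ≤ ∑' y : s, ENNReal.ofReal θ * ρ (cyl y) := by
      refine ENNReal.tsum_le_tsum fun y => ?_
      have h1 := quasi_indep h y (Nf y) (hNf1 y) hU
      have h2 := hNf y
      have h3 : ρ.real (cyl y ∩ {Z | ∀ i < Nf y, shift^[i] Z ∈ U}) ≤ θ * ρ.real (cyl (y : BStr)) := by
        rw [hθ, add_mul]; linarith
      have h4 := ENNReal.ofReal_le_ofReal h3
      rw [ENNReal.ofReal_mul hθ0, ofReal_measureReal, ofReal_measureReal] at h4
      exact h4
    _ = _ := ENNReal.tsum_mul_left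

theorem lemma_K (h : GoodM ρ D) {μ : Measure Cantor} (hμ : MLAC μ ρ) (P : BStr → Bool) (hP : Computable P)
    (hU : ρ.real {Z | ∃ n, P (seg Z n)} < 1) : ∀ᵐ Z ∂μ, ∃ k, ∀ n, ¬ P (seg (shift^[k] Z) n) := by
  obtain ⟨c, hc⟩ : ∃ c : ℕ, ρ.real {Z | ∃ n, P (seg Z n)} + 3 * 2⁻¹ ^ c < 1 := by
    have : Tendsto (fun c : ℕ => ρ.real {Z | ∃ n, P (seg Z n)} + 3 * (2⁻¹ : ℝ) ^ c) atTop (nhds (ρ.real {Z | ∃ n, P (seg Z n)} + 3 * 0)) :=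
      ((tendsto_pow_atTop_nhds_zero_of_lt_one (by norm_num) (by norm_num)).const_mul 3).const_add _
    rw [mul_zero, add_zero] at this
    exact (this.eventually (gt_mem_nhds hU)).exists
  obtain ⟨Nf, hNfc, hNf⟩ := exists_Nf h c
  set θ := ρ.real {Z | ∃ n, P (seg Z n)} + 3 * 2⁻¹ ^ c with hθ
  have hθ0 : 0 ≤ θ := by positivity
  obtain ⟨j, hj⟩ : ∃ j : ℕ, θ ^ j ≤ 2⁻¹ := by
    have := tendsto_pow_atTop_nhds_zero_of_lt_one hθ0 hc
    obtain ⟨j, hj⟩ := (this.eventually (gt_mem_nhds (show (0:ℝ) < 2⁻¹ by norm_num))).exists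
    exact ⟨j, hj.le⟩
  set Q := QP P Nf with hQ
  have hlev : ∀ m, ρ.real {Z | ∃ n, Ent Q m (seg Z n)} ≤ θ ^ m := by
    intro m
    induction m with
    | zero => simp [measureReal_le_one]
    | succ m ih =>
      have h1 := level_meas h P Nf (fun y => (hNf y).1) c (fun y => (hNf y).2) m
      have h2 := ENNReal.toReal_mono (by finiteness) h1
      rw [ENNReal.toReal_mul, ENNReal.toReal_ofReal hθ0] at h2
      rw [pow_succ, mul_comm]
      exact h2.trans (mul_le_mul_of_nonneg_left ih hθ0)
  have htest := ml_test h hμ (fun m z => decide (ent Q z (j * m) ≤ z.length)) (by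
    refine c_le (α := ℕ × BStr) ?_ (c_len .snd)
    exact (ent_comp (QP_comp hP hNfc)).comp .snd (c_mul (.const j) .fst)) (by
    intro m
    have hsub : {Z | ∃ n, decide (ent Q (seg Z n) (j * m) ≤ (seg Z n).length)} ⊆ {Z | ∃ n, Ent Q (j * m) (seg Z n)} := by
      rintro Z ⟨n, hn⟩
      simp only [decide_eq_true_eq] at hn
      have := ent_spec Q (seg Z n) (j*m) hn
      rw [seg_length] at hn
      rw [seg_take' Z hn] at this
      exact ⟨_, this⟩
    refine (measureReal_mono hsub).trans ((hlev _).trans ?_)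
    rw [pow_mul]
    exact pow_le_pow_left₀ (by positivity) hj m)
  filter_upwards [htest] with Z hZ
  by_contra hall
  push Not at hall
  -- all shifts in U : every level reached
  have hreach : ∀ m, ∃ n, Ent Q m (seg Z n) := by
    intro m
    induction m with
    | zero => exact ⟨0, seg_zero Z⟩
    | succ m ih =>
      classical
      obtain ⟨t, ht⟩ := ih
      choose f hf using hall
      have hex : ∃ n, t < n ∧ Q (seg Z t) (seg Z n) := by
        refine ⟨t + 1 + ∑ i ∈ Finset.range (Nf (seg Z t)), (i + f i), by omega, ?_⟩
        simp only [hQ, QP, decide_eq_true_eq]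
        intro i hi
        rw [seg_drop, uP_seg]
        refine ⟨f i, ?_, hf i⟩
        have : i + f i ≤ ∑ i ∈ Finset.range (Nf (seg Z t)), (i + f i) :=
          Finset.single_le_sum (f := fun i => i + f i) (fun _ _ => Nat.zero_le _) (by simpa using hi)
        omega
      have hs := Nat.find_spec hex
      refine ⟨Nat.find hex, t, by simpa using hs.1, ?_, ?_, ?_⟩
      · rw [seg_take' Z hs.1.le]; exact ht
      · rw [seg_take' Z hs.1.le]; exact hs.2
      · intro n hn hn2 hq
        rw [seg_length] at hn
        rw [seg_take' Z hs.1.le, seg_take' Z hn.le] at hq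
        exact Nat.find_min hex hn ⟨hn2, hq⟩
  obtain ⟨m, hm⟩ := hZ
  obtain ⟨n, hn⟩ := hreach (j * m)
  apply hm n
  simp only [decide_eq_true_eq]
  rw [ent_eq Q (seg Z n) (j*m) n (by simp) (by rw [seg_take' Z le_rfl]; exact hn)]
  simp

end LemK

set_option linter.unusedSectionVars false
section Transfer
variable {ρ : Measure Cantor} [IsProbabilityMeasure ρ] {D : ℕ}

theorem markov_S (n : ℕ) (V : BStr → ℝ) (hV : ∀ x, 0 ≤ V x) {t C : ℝ} (ht : 0 < t)
    (hC : ∑ x ∈ S n, V x ≤ C) : ρ.real {Z | t * ρ.real (cyl (seg Z n)) < V (seg Z n)} ≤ C / t := by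
  classical
  rw [meas_seg ρ n (fun x => t * ρ.real (cyl x) < V x)]
  rw [le_div_iff₀ ht, Finset.sum_mul]
  calc _ ≤ ∑ x ∈ (S n).filter (fun x => t * ρ.real (cyl x) < V x), V x := by
        refine Finset.sum_le_sum fun x hx => ?_
        have := (Finset.mem_filter.1 hx).2
        linarith
    _ ≤ ∑ x ∈ S n, V x := Finset.sum_le_sum_of_subset_of_nonneg (Finset.filter_subset _ _) (fun x _ _ => hV x)
    _ ≤ C := hC

theorem union_tele (E : ℕ → Set Cantor) {c : ℝ} (hc : 0 ≤ c) (hE : ∀ n, ρ.real (E n) ≤ c / ((n + 1) * (n + 2))) :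
    ρ.real (⋃ n, E n) ≤ c := by
  have h1 : ρ (⋃ n, E n) ≤ ENNReal.ofReal c := by
    refine (measure_iUnion_le _).trans ?_
    refine ENNReal.tsum_le_of_sum_range_le fun n => ?_
    have h2 : ∀ n : ℕ, ∑ i ∈ Finset.range n, ρ.real (E i) ≤ c - c / (n + 1) := by
      intro n
      induction n with
      | zero => simp
      | succ n ih =>
        rw [Finset.sum_range_succ]
        have h3 := hE n
        have h4 : c / ((n + 1) * (n + 2)) = c / ((n:ℝ) + 1) - c / (n + 2) := by
          field_simp; ring
        have h5 : ((n + 1 : ℕ) : ℝ) + 1 = n + 2 := by push_cast; ring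
        rw [h5]; linarith
    have h3 : ∑ i ∈ Finset.range n, ρ (E i) = ENNReal.ofReal (∑ i ∈ Finset.range n, ρ.real (E i)) := by
      rw [ENNReal.ofReal_sum_of_nonneg (fun i _ => measureReal_nonneg)]
      exact Finset.sum_congr rfl fun i _ => (ofReal_measureReal).symm
    rw [h3]
    refine ENNReal.ofReal_le_ofReal ((h2 n).trans ?_)
    have : 0 ≤ c / ((n:ℝ) + 1) := by positivity
    linarith
  exact ENNReal.toReal_le_of_le_ofReal hc h1

theorem sum_drop (n k : ℕ) : ∑ x ∈ S (k + n), ρ.real (cyl (x.drop k)) = 2 ^ k := by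
  rw [sum_S_add]
  have : ∀ x ∈ S k, ∑ y ∈ S n, ρ.real (cyl ((x ++ y).drop k)) = 1 := by
    intro x hx
    rw [← sum_S_one ρ n]
    refine Finset.sum_congr rfl fun y _ => ?_
    rw [mem_S] at hx
    rw [← hx, List.drop_left]
  rw [Finset.sum_congr rfl this]
  simp [S_card]

theorem transfer (h : GoodM ρ D) {μ : Measure Cantor} (hμ : MLAC μ ρ) (k : ℕ) :
    ∀ᵐ Z ∂μ, ∃ C : ℝ, ∀ n : ℕ, ρ.real (cyl (seg (shift^[k] Z) n)) ≤ C * ((n + 1) * (n + 2)) * ρ.real (cyl (seg Z (k + n))) := by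
  obtain ⟨A, hA, hA2⟩ := h.mult
  have key := ml_test h hμ (fun m x => decide (k ≤ x.length) && decide
      (4 * 2 ^ m * 2 ^ k * ((x.length - k + 1) * (x.length - k + 2)) * A x < A (x.drop k) * 2 ^ (D * k))) ?_ ?_
  · filter_upwards [key] with Z ⟨m, hm⟩
    refine ⟨16 * 2 ^ m * 2 ^ k, fun n => ?_⟩
    have h1 := hm (k + n)
    simp only [seg_length, Bool.and_eq_true, decide_eq_true_eq, not_and, not_lt] at h1
    have h2 := h1 (by omega)
    rw [seg_drop, Nat.add_sub_cancel_left] at h2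
    have h3 : (A (seg (shift^[k] Z) n) : ℝ) * 2 ^ (D * k) ≤ 4 * 2 ^ m * 2 ^ k * ((n + 1) * (n + 2)) * A (seg Z (k + n)) := by
      exact_mod_cast h2
    have h4 := (hA2 (seg (shift^[k] Z) n)).1
    have h5 := (hA2 (seg Z (k + n))).2
    rw [seg_length] at h4 h5
    set a := ρ.real (cyl (seg (shift^[k] Z) n))
    set b := ρ.real (cyl (seg Z (k+n)))
    set c : ℝ := 2 ^ m * 2 ^ k * ((n + 1) * (n + 2)) with hc
    have hc0 : 0 < c := by positivity
    set w : ℝ := 2 ^ (D * (k + n) + 3) with hw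
    have hw0 : 0 < w := by positivity
    have h6 : w * a ≤ 2 * (A (seg (shift^[k] Z) n) * 2 ^ (D * k)) := by
      calc w * a = (2 ^ (D * n + 3) * a) * 2 ^ (D * k) := by rw [hw]; ring
        _ ≤ (2 * A (seg (shift^[k] Z) n)) * 2 ^ (D * k) := by gcongr
        _ = _ := by ring
    have h7 : w * a ≤ w * (16 * c * b) := by
      calc w * a ≤ 2 * (4 * c * A (seg Z (k + n))) := by rw [hc]; linarith
        _ ≤ 2 * (4 * c * (2 * (w * b))) := by gcongr
        _ = _ := by ring
    have := le_of_mul_le_mul_left h7 hw0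
    rw [hc] at this; linarith
  · have hx : Computable (fun q : ℕ × BStr => q.2) := .snd
    have hm : Computable (fun q : ℕ × BStr => q.1) := .fst
    refine c_and (α := ℕ × BStr) (c_le (.const k) (c_len hx)) (c_lt (c_mul (c_mul ?_ ?_) (hA.comp hx)) ?_)
    · exact c_mul (c_mul (.const 4) (c_pow (.const 2) hm)) (.const _)
    · exact c_mul (c_add (c_sub (c_len hx) (.const k)) (.const 1)) (c_add (c_sub (c_len hx) (.const k)) (.const 2))
    · exact c_mul (hA.comp (c_drop hx (.const k))) (.const _)
  · intro m
    have hsub : {Z | ∃ n, (decide (k ≤ (seg Z n).length) && decide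
      (4 * 2 ^ m * 2 ^ k * (((seg Z n).length - k + 1) * ((seg Z n).length - k + 2)) * A (seg Z n) < A ((seg Z n).drop k) * 2 ^ (D * k)))}
       ⊆ ⋃ n : ℕ, {Z | (2 ^ m * 2 ^ k * ((n + 1) * (n + 2)) : ℝ) * ρ.real (cyl (seg Z (k + n))) < (fun x : BStr => ρ.real (cyl (x.drop k))) (seg Z (k + n))} := by
      rintro Z ⟨N, hN⟩
      simp only [seg_length, Bool.and_eq_true, decide_eq_true_eq] at hN
      obtain ⟨n, rfl⟩ := Nat.exists_eq_add_of_le hN.1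
      have h2 := hN.2
      simp only [Set.mem_iUnion, Set.mem_ofPred_eq]
      refine ⟨n, ?_⟩
      rw [seg_drop, Nat.add_sub_cancel_left] at *
      have h3 : 4 * 2 ^ m * 2 ^ k * ((n + 1) * (n + 2)) * A (seg Z (k + n)) < (A (seg (shift^[k] Z) n) : ℝ) * 2 ^ (D * k) := by
        exact_mod_cast h2
      have h4 := (hA2 (seg (shift^[k] Z) n)).2
      have h5 := (hA2 (seg Z (k + n))).1
      rw [seg_length] at h4 h5
      set a := ρ.real (cyl (seg (shift^[k] Z) n))
      set b := ρ.real (cyl (seg Z (k+n)))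
      set c : ℝ := 2 ^ m * 2 ^ k * ((n + 1) * (n + 2)) with hc
      have hc0 : 0 < c := by positivity
      set w : ℝ := 2 ^ (D * (k + n) + 3) with hw
      have hw0 : 0 < w := by positivity
      have h6 : (A (seg (shift^[k] Z) n) : ℝ) * 2 ^ (D * k) ≤ 2 * (w * a) := by
        calc _ ≤ 2 * (2 ^ (D * n + 3) * a) * 2 ^ (D * k) := by gcongr
          _ = _ := by rw [hw]; ring
      have h7 : w * (c * b) < w * a := by
        have : c * (w * b) ≤ c * (2 * A (seg Z (k + n))) := by gcongr
        have e : 4 * 2 ^ m * 2 ^ k * (((n:ℝ) + 1) * (n + 2)) * A (seg Z (k + n)) = 2 * (c * (2 * A (seg Z (k + n)))) := by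
          rw [hc]; ring
        rw [e] at h3
        nlinarith
      exact lt_of_mul_lt_mul_left h7 hw0.le
    refine (measureReal_mono hsub).trans (union_tele _ (by positivity) fun n => ?_)
    refine (markov_S (ρ := ρ) (k + n) (fun x : BStr => ρ.real (cyl (x.drop k))) (fun _ => measureReal_nonneg) (C := 2 ^ k) (by positivity) (sum_drop n k).le).trans (le_of_eq ?_)
    rw [inv_pow]; field_simp

end Transfer

set_option linter.unusedSectionVars false
section UPLO
variable {ρ : Measure Cantor} [IsProbabilityMeasure ρ] {D : ℕ}

theorem asym {c : ℝ} (hc : 0 < c) (K : ℝ) : ∀ᶠ n : ℕ in atTop, K * (((n:ℝ) + 1) * (n + 2)) ≤ (2:ℝ) ^ (c * n) := by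
  have h1 : (1:ℝ) < 2 ^ c := Real.one_lt_rpow (by norm_num) hc
  have h2 := isLittleO_pow_const_const_pow_of_one_lt (R := ℝ) 2 h1
  have h3 := h2.def (c := (6 * (|K| + 1))⁻¹) (by positivity)
  filter_upwards [h3, eventually_ge_atTop 1] with n hn hn1
  have hn2 : (1:ℝ) ≤ n := by exact_mod_cast hn1
  rw [Real.norm_of_nonneg (by positivity), Real.norm_of_nonneg (by positivity), inv_mul_eq_div, le_div_iff₀ (by positivity)] at hn
  rw [Real.rpow_mul (by norm_num), Real.rpow_natCast]
  have h4 : ((n:ℝ) + 1) * (n + 2) ≤ 6 * n ^ 2 := by nlinarith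
  calc K * (((n:ℝ) + 1) * (n + 2)) ≤ (|K| + 1) * (6 * n ^ 2) := by
        refine mul_le_mul ?_ h4 (by positivity) (by positivity)
        linarith [le_abs_self K]
    _ ≤ _ := by linarith

theorem pow_cmp {a b n : ℕ} (hb : 0 < b) {X Y : ℝ} (hX : 0 ≤ X) (hY : 0 ≤ Y) :
    X ^ b * 2 ^ (a * n) < Y ^ b ↔ X < Y * (2:ℝ) ^ (-((a / b : ℝ) * n)) := by
  set u := (2:ℝ) ^ (-((a / b : ℝ) * n)) with hu
  have hu0 : 0 < u := by positivity
  have h1 : u ^ b * 2 ^ (a * n) = 1 := by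
    rw [hu, ← Real.rpow_natCast, ← Real.rpow_mul (by norm_num), ← Real.rpow_natCast (2:ℝ) (a * n), ← Real.rpow_add (by norm_num)]
    have : -((a / b : ℝ) * n) * b + ((a * n : ℕ) : ℝ) = 0 := by
      push_cast
      have : (b:ℝ) ≠ 0 := by positivity
      field_simp; ring
    rw [this, Real.rpow_zero]
  have h2 : Y ^ b = (Y * u) ^ b * 2 ^ (a * n) := by rw [mul_pow, mul_assoc, h1, mul_one]
  rw [h2, mul_lt_mul_iff_left₀ (by positivity), pow_lt_pow_iff_left₀ hX (by positivity) (by omega)]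

theorem exists_ab {r r' : ℝ} (hr : 0 ≤ r) (h : r < r') : ∃ a b : ℕ, 0 < b ∧ r < (a / b : ℝ) ∧ (a / b : ℝ) < r' := by
  obtain ⟨q, hq1, hq2⟩ := exists_rat_btwn h
  have hq : 0 < q := by exact_mod_cast hr.trans_lt hq1
  refine ⟨q.num.toNat, q.den, q.den_pos, ?_⟩
  have e : ((q.num.toNat : ℝ) / (q.den : ℝ)) = q := by
    have h1 : ((q.num.toNat : ℕ) : ℝ) = ((q.num.toNat : ℤ) : ℝ) := by push_cast; rfl
    rw [h1, Int.toNat_of_nonneg (Rat.num_nonneg.2 hq.le)]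
    exact_mod_cast (Rat.num_div_den q)
  rw [e]; exact ⟨hq1, hq2⟩

theorem pow_cmp2 {a b n : ℕ} (hb : 0 < b) {X Y : ℝ} (hX : 0 ≤ X) (hY : 0 ≤ Y) :
    Y ^ b < X ^ b * 2 ^ (a * n) ↔ Y * (2:ℝ) ^ (-((a / b : ℝ) * n)) < X := by
  set u := (2:ℝ) ^ (-((a / b : ℝ) * n)) with hu
  have hu0 : 0 < u := by positivity
  have h1 : u ^ b * 2 ^ (a * n) = 1 := by
    rw [hu, ← Real.rpow_natCast, ← Real.rpow_mul (by norm_num), ← Real.rpow_natCast (2:ℝ) (a * n), ← Real.rpow_add (by norm_num)]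
    have : -((a / b : ℝ) * n) * b + ((a * n : ℕ) : ℝ) = 0 := by
      push_cast
      have : (b:ℝ) ≠ 0 := by positivity
      field_simp; ring
    rw [this, Real.rpow_zero]
  have h2 : Y ^ b = (Y * u) ^ b * 2 ^ (a * n) := by rw [mul_pow, mul_assoc, h1, mul_one]
  rw [h2, mul_lt_mul_iff_left₀ (by positivity), pow_lt_pow_iff_left₀ (by positivity) hX (by omega)]

theorem ev_shift (k : ℕ) {p : ℕ → Prop} (h : ∀ᶠ n in atTop, p (k + n)) : ∀ᶠ n in atTop, p n := by
  rw [eventually_atTop] at *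
  obtain ⟨N, hN⟩ := h
  refine ⟨k + N, fun n hn => ?_⟩
  have := hN (n - k) (by omega)
  rwa [show k + (n - k) = n by omega] at this

theorem LO (h : GoodM ρ D) {μ : Measure Cantor} (hμ : MLAC μ ρ) {r r' : ℝ} (hr0 : 0 ≤ r') (hr : r' < r) (N : ℕ)
    (hN : ρ.real {Z | ∃ n ≥ N, (2:ℝ) ^ (-(r * n)) < ρ.real (cyl (seg Z n))} < 1) :
    ∀ᵐ Z ∂μ, ∀ᶠ n : ℕ in atTop, ρ.real (cyl (seg Z n)) ≤ (2:ℝ) ^ (-(r' * n)) := by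
  obtain ⟨A, hA, hA2⟩ := h.mult
  obtain ⟨a, b, hb, hq1, hq2⟩ := exists_ab hr0 hr
  have hP : ∀ x : BStr, ((2 * 2 ^ (D * x.length + 3)) ^ b < A x ^ b * 2 ^ (a * x.length)) ↔
      (2 * 2 ^ (D * x.length + 3)) * (2:ℝ) ^ (-((a / b : ℝ) * x.length)) < A x := by
    intro x
    rw [← pow_cmp2 hb (by positivity) (by positivity)]
    exact_mod_cast Iff.rfl
  have key := lemma_K h hμ (fun x => decide (N ≤ x.length) && decide
      ((2 * 2 ^ (D * x.length + 3)) ^ b < A x ^ b * 2 ^ (a * x.length))) ?_ ?_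
  · filter_upwards [key] with Z ⟨k, hk⟩
    have h1 := asym (sub_pos.2 hq1) (4 * 2 ^ (r' * k))
    refine ev_shift k ?_
    filter_upwards [h1, eventually_ge_atTop N] with n hn hnN
    have h2 := hk n
    simp only [Bool.and_eq_true, decide_eq_true_eq, not_and, not_lt, seg_length] at h2
    have hPn := hP (seg (shift^[k] Z) n)
    rw [seg_length] at hPn
    have h3 := not_lt.1 (fun hh => absurd (hPn.2 hh) (not_lt.2 (h2 hnN)))
    have h4 := (hA2 (seg (shift^[k] Z) n)).1
    rw [seg_length] at h4
    have h5 := cyl_le_drop h.mp Z k n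
    set w : ℝ := 2 ^ (D * n + 3)
    have hw0 : 0 < w := by positivity
    set q : ℝ := a / b with hq
    have h6 : ρ.real (cyl (seg (shift^[k] Z) n)) ≤ 4 * 2 ^ (-(q * n)) :=
      le_of_mul_le_mul_left (by linarith) hw0
    refine h5.trans (h6.trans ?_)
    have h7 : (4:ℝ) * 2 ^ (r' * k) ≤ 2 ^ ((q - r') * n) := by
      refine le_trans ?_ hn
      refine le_mul_of_one_le_right (by positivity) ?_
      have : (0:ℝ) ≤ n := by positivity
      nlinarith
    have e1 : (2:ℝ) ^ (-(r' * ((k + n : ℕ) : ℝ))) = 2 ^ ((q - r') * n) * (2 ^ (-(q * n)) * 2 ^ (-(r' * k))) := by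
      rw [← Real.rpow_add (by norm_num), ← Real.rpow_add (by norm_num)]; push_cast; congr 1; ring
    have e2 : (4:ℝ) * 2 ^ (-(q * n)) = (4 * 2 ^ (r' * k)) * (2 ^ (-(q * n)) * 2 ^ (-(r' * k))) := by
      have : (2:ℝ) ^ (r' * k) * 2 ^ (-(r' * k)) = 1 := by rw [← Real.rpow_add (by norm_num)]; simp
      linear_combination (-4 * (2:ℝ) ^ (-(q * n))) * this
    rw [e1, e2]; gcongr
  · have hw : Computable (fun x : BStr => 2 * 2 ^ (D * x.length + 3)) :=
      c_mul (.const 2) (c_pow (.const 2) (c_add (c_mul (.const D) (c_len .id)) (.const 3)))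
    exact c_and (α := BStr) (c_le (.const N) (c_len .id))
      (c_lt (c_pow hw (.const b)) (c_mul (c_pow hA (.const b)) (c_pow (.const 2) (c_mul (.const a) (c_len .id)))))
  · refine lt_of_le_of_lt (measureReal_mono ?_) hN
    rintro Z ⟨n, hn⟩
    simp only [Bool.and_eq_true, decide_eq_true_eq, seg_length] at hn
    refine ⟨n, hn.1, ?_⟩
    have hPn := hP (seg Z n)
    rw [seg_length] at hPn
    have h3 := hPn.1 hn.2
    have h4 := (hA2 (seg Z n)).2
    rw [seg_length] at h4
    set w : ℝ := 2 ^ (D * n + 3)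
    have hw0 : 0 < w := by positivity
    set q : ℝ := a / b with hq
    have h6 : (2:ℝ) ^ (-(q * n)) < ρ.real (cyl (seg Z n)) :=
      lt_of_mul_lt_mul_left (a := w) (by linarith) hw0.le
    refine lt_of_le_of_lt ?_ h6
    refine Real.rpow_le_rpow_of_exponent_le (by norm_num) ?_
    have : (0:ℝ) ≤ n := by positivity
    nlinarith

theorem UP (h : GoodM ρ D) {μ : Measure Cantor} (hμ : MLAC μ ρ) {r r' : ℝ} (hr0 : 0 ≤ r) (hr : r < r') (N : ℕ)
    (hN : ρ.real {Z | ∃ n ≥ N, ρ.real (cyl (seg Z n)) < (2:ℝ) ^ (-(r * n))} < 1) :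
    ∀ᵐ Z ∂μ, ∀ᶠ n : ℕ in atTop, (2:ℝ) ^ (-(r' * n)) ≤ ρ.real (cyl (seg Z n)) := by
  obtain ⟨A, hA, hA2⟩ := h.mult
  obtain ⟨a, b, hb, hq1, hq2⟩ := exists_ab hr0 hr
  have hP : ∀ x : BStr, ((2 * A x) ^ b * 2 ^ (a * x.length) < (2 ^ (D * x.length + 3)) ^ b) ↔
      2 * (A x : ℝ) < (2 ^ (D * x.length + 3)) * (2:ℝ) ^ (-((a / b : ℝ) * x.length)) := by
    intro x
    rw [← pow_cmp hb (by positivity) (by positivity)]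
    exact_mod_cast Iff.rfl
  have key := lemma_K h hμ (fun x => decide (N ≤ x.length) && decide
      ((2 * A x) ^ b * 2 ^ (a * x.length) < (2 ^ (D * x.length + 3)) ^ b)) ?_ ?_
  · have hT : ∀ᵐ Z ∂μ, ∀ k : ℕ, ∃ C : ℝ, ∀ n : ℕ, ρ.real (cyl (seg (shift^[k] Z) n)) ≤ C * ((n + 1) * (n + 2)) * ρ.real (cyl (seg Z (k + n))) :=
      ae_all_iff.2 fun k => transfer h hμ k
    filter_upwards [key, hT] with Z ⟨k, hk⟩ hTZ
    obtain ⟨C, hC⟩ := hTZ k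
    have h1 := asym (sub_pos.2 hq2) (4 * C)
    refine ev_shift k ?_
    filter_upwards [h1, eventually_ge_atTop N] with n hn hnN
    have h2 := hk n
    simp only [Bool.and_eq_true, decide_eq_true_eq, not_and, not_lt, seg_length] at h2
    have hPn := hP (seg (shift^[k] Z) n)
    rw [seg_length] at hPn
    have h3 := not_lt.1 (fun hh => absurd (hPn.2 hh) (not_lt.2 (h2 hnN)))
    have h4 := (hA2 (seg (shift^[k] Z) n)).2
    rw [seg_length] at h4
    have h5 := hC n
    set w : ℝ := 2 ^ (D * n + 3)
    have hw0 : 0 < w := by positivity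
    set q : ℝ := a / b with hq
    have h6 : (2:ℝ) ^ (-(q * n)) ≤ 4 * ρ.real (cyl (seg (shift^[k] Z) n)) :=
      le_of_mul_le_mul_left (by linarith) hw0
    have h7 : (2:ℝ) ^ (-(q * n)) ≤ 2 ^ ((r' - q) * n) * ρ.real (cyl (seg Z (k + n))) := by
      refine h6.trans ?_
      calc _ ≤ 4 * (C * ((n + 1) * (n + 2)) * ρ.real (cyl (seg Z (k + n)))) := by gcongr
        _ = 4 * C * ((n + 1) * (n + 2)) * ρ.real (cyl (seg Z (k + n))) := by ring
        _ ≤ _ := by gcongr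
    have e1 : (2:ℝ) ^ ((r' - q) * n) * 2 ^ (-(r' * n)) = 2 ^ (-(q * n)) := by
      rw [← Real.rpow_add (by norm_num)]; congr 1; ring
    have h8 : (2:ℝ) ^ (-(r' * n)) ≤ ρ.real (cyl (seg Z (k + n))) := by
      refine le_of_mul_le_mul_left (a := (2:ℝ) ^ ((r' - q) * n)) ?_ (by positivity)
      rw [e1]; exact h7
    refine le_trans ?_ h8
    refine Real.rpow_le_rpow_of_exponent_le (by norm_num) ?_
    push_cast
    have : (0:ℝ) ≤ k := by positivity
    nlinarith
  · have hw : Computable (fun x : BStr => 2 ^ (D * x.length + 3)) :=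
      c_pow (.const 2) (c_add (c_mul (.const D) (c_len .id)) (.const 3))
    exact c_and (α := BStr) (c_le (.const N) (c_len .id))
      (c_lt (c_mul (c_pow (c_mul (.const 2) hA) (.const b)) (c_pow (.const 2) (c_mul (.const a) (c_len .id)))) (c_pow hw (.const b)))
  · refine lt_of_le_of_lt (measureReal_mono ?_) hN
    rintro Z ⟨n, hn⟩
    simp only [Bool.and_eq_true, decide_eq_true_eq, seg_length] at hn
    refine ⟨n, hn.1, ?_⟩
    have hPn := hP (seg Z n)
    rw [seg_length] at hPn
    have h3 := hPn.1 hn.2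
    have h4 := (hA2 (seg Z n)).1
    rw [seg_length] at h4
    set w : ℝ := 2 ^ (D * n + 3)
    have hw0 : 0 < w := by positivity
    set q : ℝ := a / b with hq
    have h6 : ρ.real (cyl (seg Z n)) < (2:ℝ) ^ (-(q * n)) :=
      lt_of_mul_lt_mul_left (a := w) (by linarith) hw0.le
    refine lt_of_lt_of_le h6 ?_
    refine Real.rpow_le_rpow_of_exponent_le (by norm_num) ?_
    have : (0:ℝ) ≤ n := by positivity
    nlinarith

end UPLO

set_option linter.unusedSectionVars false
section Garsia
variable {ρ : Measure Cantor} [IsProbabilityMeasure ρ]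

noncomputable def gM (f : Cantor → ℝ) : ℕ → Cantor → ℝ
  | 0, _ => 0
  | n + 1, Z => max 0 (f Z + gM f n (shift Z))

theorem gM_nonneg (f : Cantor → ℝ) (n : ℕ) (Z : Cantor) : 0 ≤ gM f n Z := by
  cases n with
  | zero => exact le_rfl
  | succ n => exact le_max_left _ _

theorem gM_mono (f : Cantor → ℝ) (n : ℕ) (Z : Cantor) : gM f n Z ≤ gM f (n+1) Z := by
  induction n generalizing Z with
  | zero => exact gM_nonneg f 1 Z
  | succ n ih =>
    show max 0 (f Z + gM f n (shift Z)) ≤ max 0 (f Z + gM f (n+1) (shift Z))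
    have := ih (shift Z)
    gcongr

theorem gM_ge (f : Cantor → ℝ) (n : ℕ) (Z : Cantor) : ∑ i ∈ Finset.range n, f (shift^[i] Z) ≤ gM f n Z := by
  induction n generalizing Z with
  | zero => simp [gM]
  | succ n ih =>
    rw [Finset.sum_range_succ']
    have := ih (shift Z)
    refine le_trans ?_ (le_max_right _ _)
    simp only [Function.iterate_succ, Function.comp, Function.iterate_zero, id] at *
    linarith

theorem gM_int (hmp : MeasurePreserving shift ρ ρ) {f : Cantor → ℝ} (hf : Integrable f ρ) (n : ℕ) : Integrable (gM f n) ρ := by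
  induction n with
  | zero => exact integrable_zero _ _ _
  | succ n ih =>
    have h1 : Integrable (fun Z => f Z + gM f n (shift Z)) ρ :=
      hf.add ((hmp.integrable_comp ih.aestronglyMeasurable).2 ih)
    exact (integrable_zero _ _ _).sup h1

theorem gM_meas {f : Cantor → ℝ} (hf : Measurable f) (n : ℕ) : Measurable (gM f n) := by
  induction n with
  | zero => exact measurable_const
  | succ n ih => exact measurable_const.max (hf.add (ih.comp measurable_shift))

theorem garsia (hmp : MeasurePreserving shift ρ ρ) {f : Cantor → ℝ} (hfm : Measurable f) (hf : Integrable f ρ) (n : ℕ) :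
    0 ≤ ∫ Z in {Z | 0 < gM f (n+1) Z}, f Z ∂ρ := by
  have hE : MeasurableSet {Z | 0 < gM f (n+1) Z} := measurableSet_lt measurable_const (gM_meas hfm _)
  rw [← integral_indicator hE]
  have h1 : ∫ Z, (gM f (n+1) Z - gM f n (shift Z)) ∂ρ ≤ ∫ Z, Set.indicator {Z | 0 < gM f (n+1) Z} f Z ∂ρ := by
    refine integral_mono ((gM_int hmp hf _).sub ((hmp.integrable_comp (gM_int hmp hf n).aestronglyMeasurable).2 (gM_int hmp hf n)))
      (hf.indicator hE) ?_
    intro Z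
    by_cases hZ : 0 < gM f (n+1) Z
    · simp only [Set.indicator, Set.mem_ofPred_eq, hZ, if_true]
      have e : gM f (n+1) Z = max 0 (f Z + gM f n (shift Z)) := rfl
      rcases max_cases 0 (f Z + gM f n (shift Z)) with h | h
      · rw [e, h.1] at hZ; exact absurd hZ (lt_irrefl _)
      · rw [e, h.1]; linarith
    · simp only [Set.indicator, Set.mem_ofPred_eq, hZ, if_false]
      have := gM_nonneg f n (shift Z)
      linarith
  refine le_trans ?_ h1
  have h2 : ∫ Z, gM f n (shift Z) ∂ρ = ∫ Z, gM f n Z ∂ρ := by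
    have h3 := integral_map (μ := ρ) hmp.measurable.aemeasurable (f := gM f n) (by rw [hmp.map_eq]; exact (gM_int hmp hf n).aestronglyMeasurable)
    rw [hmp.map_eq] at h3; exact h3.symm
  have h4 : Integrable (fun Z => gM f n (shift Z)) ρ := (hmp.integrable_comp (gM_int hmp hf n).aestronglyMeasurable).2 (gM_int hmp hf n)
  rw [integral_sub (gM_int hmp hf _) h4, h2]
  have := integral_mono (gM_int hmp hf n) (gM_int hmp hf (n+1)) (fun Z => gM_mono f n Z)
  linarith

noncomputable def occ (C : Set Cantor) (L : ℕ) (Z : Cantor) : ℝ :=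
  ∑ i ∈ Finset.range L, C.indicator (fun _ => (1:ℝ)) (shift^[i] Z)

theorem occ_le (C : Set Cantor) (L : ℕ) (Z : Cantor) : occ C L Z ≤ L := by
  unfold occ
  calc _ ≤ ∑ i ∈ Finset.range L, (1:ℝ) := by
        refine Finset.sum_le_sum fun i _ => ?_
        exact Set.indicator_le_self' (fun _ _ => zero_le_one) _
    _ = L := by simp

theorem maximal (hmp : MeasurePreserving shift ρ ρ) {C : Set Cantor} (hC : MeasurableSet C) {δ : ℝ} (hδ : 0 < δ) :
    ρ.real {Z | ∃ L : ℕ, δ * L < occ C L Z} ≤ ρ.real C / δ := by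
  set f : Cantor → ℝ := fun Z => C.indicator (fun _ => (1:ℝ)) Z - δ with hf
  have hfm : Measurable f := (measurable_const.indicator hC).sub_const δ
  have hi1 : Integrable (C.indicator (fun _ => (1:ℝ))) ρ := (integrable_const 1).indicator hC
  have hfi : Integrable f ρ := hi1.sub (integrable_const δ)
  have hb : ∀ n, ρ {Z | 0 < gM f n Z} ≤ ENNReal.ofReal (ρ.real C / δ) := by
    intro n
    cases n with
    | zero => simp [gM]
    | succ n =>
      set E := {Z | 0 < gM f (n+1) Z} with hEdef
      have hE : MeasurableSet E := measurableSet_lt measurable_const (gM_meas hfm _)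
      have h1 := garsia hmp hfm hfi n
      rw [hf, integral_sub hi1.integrableOn (integrable_const δ).integrableOn, setIntegral_const, integral_indicator hC,
        setIntegral_const] at h1
      rw [← ofReal_measureReal]
      refine ENNReal.ofReal_le_ofReal ?_
      rw [le_div_iff₀ hδ]
      have h2 : (ρ.restrict E).real C ≤ ρ.real C := by
        rw [measureReal_restrict_apply hC]; exact measureReal_mono Set.inter_subset_left
      simp only [smul_eq_mul, mul_one] at h1
      change 0 ≤ (ρ.restrict E).real C - ρ.real E * δ at h1
      linarith
  have hsub : {Z | ∃ L : ℕ, δ * L < occ C L Z} ⊆ ⋃ n, {Z | 0 < gM f n Z} := by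
    rintro Z ⟨L, hL⟩
    simp only [Set.mem_iUnion]
    refine ⟨L, ?_⟩
    refine lt_of_lt_of_le ?_ (gM_ge f L Z)
    simp only [hf, Finset.sum_sub_distrib, Finset.sum_const, Finset.card_range, nsmul_eq_mul]
    unfold occ at hL; linarith
  have hmono : Monotone (fun n => {Z | 0 < gM f n Z}) :=
    monotone_nat_of_le_succ fun n Z hZ => lt_of_lt_of_le hZ (gM_mono f n Z)
  refine (measureReal_mono hsub).trans ?_
  refine ENNReal.toReal_le_of_le_ofReal (by positivity) ?_
  rw [hmono.measure_iUnion]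
  exact iSup_le hb

end Garsia

set_option linter.unusedSectionVars false
section Packing
variable {ρ : Measure Cantor} [IsProbabilityMeasure ρ] {D : ℕ}

noncomputable def Wf (ρ : Measure Cantor) (δ : ℝ) (N0 : ℕ) : ℕ → BStr → ℝ
  | 0, x => if x.length = 0 then 1 else 0
  | k + 1, x => if x.length = 0 then 1 else 1 / 4 * Wf ρ δ N0 k (x.drop 1) +
      ∑ n ∈ Finset.Icc N0 x.length, (2:ℝ) ^ (-(δ * n)) * (ρ.real (cyl (x.take n)) * Wf ρ δ N0 k (x.drop n))

theorem Wf_nonneg (δ : ℝ) (N0 k : ℕ) (x : BStr) : 0 ≤ Wf ρ δ N0 k x := by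
  induction k generalizing x with
  | zero => unfold Wf; split_ifs <;> norm_num
  | succ k ih =>
    unfold Wf
    split_ifs
    · norm_num
    · have := ih (x.drop 1)
      refine add_nonneg (by positivity) (Finset.sum_nonneg fun n _ => ?_)
      have := ih (x.drop n)
      positivity

theorem sum_split (n m : ℕ) (F G : BStr → ℝ) :
    ∑ x ∈ S (n + m), F (x.take n) * G (x.drop n) = (∑ x ∈ S n, F x) * ∑ x ∈ S m, G x := by
  rw [sum_S_add, Finset.sum_mul_sum]
  refine Finset.sum_congr rfl fun x hx => Finset.sum_congr rfl fun y _ => ?_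
  rw [mem_S] at hx
  rw [← hx, List.drop_left, List.take_left]

theorem Wf_sum {δ : ℝ} {N0 : ℕ} (hN0 : ∀ L, ∑ n ∈ Finset.Icc N0 L, (2:ℝ) ^ (-(δ * n)) ≤ 1 / 2) (k L : ℕ) :
    ∑ x ∈ S L, Wf ρ δ N0 k x ≤ 1 := by
  have h0 : ∀ k, ∑ x ∈ S 0, Wf ρ δ N0 k x ≤ 1 := by
    intro k; rw [S_zero]; cases k <;> simp [Wf]
  induction k generalizing L with
  | zero =>
    cases L with
    | zero => exact h0 0
    | succ L =>
      rw [Finset.sum_eq_zero]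
      · norm_num
      · intro x hx; rw [mem_S] at hx; simp [Wf, hx]
  | succ k ih =>
    cases L with
    | zero => exact h0 _
    | succ L =>
      have e : ∀ x ∈ S (L+1), Wf ρ δ N0 (k+1) x = 1 / 4 * Wf ρ δ N0 k (x.drop 1) +
          ∑ n ∈ Finset.Icc N0 (L+1), (2:ℝ) ^ (-(δ * n)) * (ρ.real (cyl (x.take n)) * Wf ρ δ N0 k (x.drop n)) := by
        intro x hx; rw [mem_S] at hx
        simp [Wf, hx]
      rw [Finset.sum_congr rfl e, Finset.sum_add_distrib, ← Finset.mul_sum, Finset.sum_comm]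
      have h1 : ∑ x ∈ S (L+1), Wf ρ δ N0 k (x.drop 1) ≤ 2 := by
        have := sum_split 1 L (fun _ => 1) (Wf ρ δ N0 k)
        simp only [one_mul, Finset.sum_const, S_card] at this
        rw [add_comm 1 L] at this
        rw [this]
        have := ih L
        simp; linarith
      have h2 : ∑ n ∈ Finset.Icc N0 (L+1), ∑ x ∈ S (L+1), (2:ℝ) ^ (-(δ * n)) * (ρ.real (cyl (x.take n)) * Wf ρ δ N0 k (x.drop n))
          ≤ ∑ n ∈ Finset.Icc N0 (L+1), (2:ℝ) ^ (-(δ * n)) := by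
        refine Finset.sum_le_sum fun n hn => ?_
        obtain ⟨m, hm⟩ := Nat.exists_eq_add_of_le (Finset.mem_Icc.1 hn).2
        rw [← Finset.mul_sum, hm, sum_split n m (fun x => ρ.real (cyl x)), sum_S_one, one_mul]
        exact mul_le_of_le_one_right (by positivity) (ih m)
      have := hN0 (L+1)
      linarith

theorem occ_add (C : Set Cantor) (n m : ℕ) (Z : Cantor) : occ C (n + m) Z = occ C n Z + occ C m (shift^[n] Z) := by
  unfold occ
  rw [Finset.sum_range_add]
  congr 1
  refine Finset.sum_congr rfl fun i _ => ?_
  rw [← Function.iterate_add_apply, add_comm i n]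

theorem occ_nonneg (C : Set Cantor) (n : ℕ) (Z : Cantor) : 0 ≤ occ C n Z :=
  Finset.sum_nonneg fun _ _ => Set.indicator_nonneg (fun _ _ => zero_le_one) _

def Cset (ρ : Measure Cantor) (r : ℝ) (N0 M : ℕ) : Set Cantor :=
  {Z | ∀ n, N0 ≤ n → n ≤ M → ρ.real (cyl (seg Z n)) ≤ (2:ℝ) ^ (-(r * n))}

theorem Cset_meas (r : ℝ) (N0 M : ℕ) : MeasurableSet (Cset ρ r N0 M) := by
  have : Cset ρ r N0 M = ⋂ n, {Z | (fun x : BStr => N0 ≤ n → n ≤ M → ρ.real (cyl x) ≤ (2:ℝ) ^ (-(r * n))) (seg Z n)} := by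
    ext Z; simp [Cset]
  rw [this]
  exact MeasurableSet.iInter fun n => measurableSet_seg (fun x : BStr => N0 ≤ n → n ≤ M → ρ.real (cyl x) ≤ (2:ℝ) ^ (-(r * n))) n

theorem Wf_ge {δ r : ℝ} (hr : 0 ≤ r) (hδ : 0 < δ) {N0 : ℕ} (hN : 1 ≤ N0) (M k L : ℕ) (hL : L ≤ k) (Z : Cantor) :
    (2:ℝ) ^ (-((r + δ) * L + 2 * occ (Cset ρ r N0 M) L Z + 2 * (min L M : ℕ))) ≤ Wf ρ δ N0 k (seg Z L) := by
  set C := Cset ρ r N0 M with hCdef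
  induction k generalizing L Z with
  | zero =>
    have : L = 0 := by omega
    subst this; simp [Wf, occ]
  | succ k ih =>
    rcases L with _ | l
    · simp [Wf, occ]
    · have eW : Wf ρ δ N0 (k+1) (seg Z (l+1)) = 1 / 4 * Wf ρ δ N0 k (seg (shift^[1] Z) l) +
          ∑ n ∈ Finset.Icc N0 (l+1), (2:ℝ) ^ (-(δ * n)) * (ρ.real (cyl ((seg Z (l+1)).take n)) * Wf ρ δ N0 k ((seg Z (l+1)).drop n)) := by
        have e1 := seg_drop Z (l+1) 1
        rw [Nat.add_sub_cancel] at e1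
        rw [Wf, e1]; simp
      have hnn : ∀ n : ℕ, 0 ≤ (2:ℝ) ^ (-(δ * n)) * (ρ.real (cyl ((seg Z (l+1)).take n)) * Wf ρ δ N0 k ((seg Z (l+1)).drop n)) := by
        intro n
        have := Wf_nonneg (ρ := ρ) δ N0 k ((seg Z (l+1)).drop n)
        positivity
      have hocc : occ C (l+1) Z = C.indicator (fun _ => (1:ℝ)) Z + occ C l (shift^[1] Z) := by
        rw [add_comm l 1, occ_add]; simp [occ]
      have g1 : 1 / 4 * Wf ρ δ N0 k (seg (shift^[1] Z) l) ≤ Wf ρ δ N0 (k+1) (seg Z (l+1)) := by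
        rw [eW]; exact le_add_of_nonneg_right (Finset.sum_nonneg fun n _ => hnn n)
      -- the skip step
      have skip : (1 + (min l M : ℕ) ≤ C.indicator (fun _ => (1:ℝ)) Z + ((min (l+1) M : ℕ) : ℝ)) →
          (2:ℝ) ^ (-((r + δ) * ((l + 1 : ℕ) : ℝ) + 2 * occ C (l+1) Z + 2 * (min (l+1) M : ℕ))) ≤ Wf ρ δ N0 (k+1) (seg Z (l+1)) := by
        intro hs
        refine le_trans ?_ g1
        refine le_trans ?_ (mul_le_mul_of_nonneg_left (ih l (by omega) (shift^[1] Z)) (by norm_num))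
        have e4 : (1 / 4 : ℝ) = 2 ^ (-2 : ℝ) := by rw [Real.rpow_neg (by norm_num)]; norm_num
        rw [e4, ← Real.rpow_add (by norm_num)]
        refine Real.rpow_le_rpow_of_exponent_le (by norm_num) ?_
        rw [hocc]; push_cast at hs ⊢; nlinarith
      by_cases hZ : Z ∈ C
      · apply skip
        rw [Set.indicator_of_mem hZ]
        have : min l M ≤ min (l+1) M := by omega
        have : ((min l M : ℕ) : ℝ) ≤ (min (l+1) M : ℕ) := by exact_mod_cast this
        linarith
      · have hZ2 := hZ
        simp only [hCdef, Cset, Set.mem_ofPred_eq] at hZ2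
        push Not at hZ2
        obtain ⟨n, hn1, hn2, hn3⟩ := hZ2
        rcases Nat.lt_or_ge (l+1) n with hlt | hge
        · apply skip
          have e1 : min l M = l := by omega
          have e2 : min (l+1) M = l + 1 := by omega
          rw [Set.indicator_of_notMem hZ, e1, e2]; push_cast; linarith
        · obtain ⟨m, hm⟩ := Nat.exists_eq_add_of_le hge
          have g2 : (2:ℝ) ^ (-(δ * n)) * (ρ.real (cyl (seg Z n)) * Wf ρ δ N0 k (seg (shift^[n] Z) m)) ≤ Wf ρ δ N0 (k+1) (seg Z (l+1)) := by
            rw [eW]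
            have h1 := Finset.single_le_sum (f := fun n : ℕ => (2:ℝ) ^ (-(δ * n)) * (ρ.real (cyl ((seg Z (l+1)).take n)) * Wf ρ δ N0 k ((seg Z (l+1)).drop n)))
              (fun n _ => hnn n) (Finset.mem_Icc.2 ⟨hn1, hge⟩)
            rw [seg_take' Z hge, seg_drop, show l + 1 - n = m by omega] at h1
            have := Wf_nonneg (ρ := ρ) δ N0 k (seg (shift^[1] Z) l)
            linarith
          refine le_trans ?_ g2
          have h3 := ih m (by omega) (shift^[n] Z)
          calc _ ≤ (2:ℝ) ^ (-(δ * n)) * (2 ^ (-(r * n)) * (2:ℝ) ^ (-((r + δ) * m + 2 * occ C m (shift^[n] Z) + 2 * (min m M : ℕ)))) := by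
                rw [← Real.rpow_add (by norm_num), ← Real.rpow_add (by norm_num)]
                refine Real.rpow_le_rpow_of_exponent_le (by norm_num) ?_
                rw [hm, occ_add]
                have h4 := occ_nonneg C n Z
                have : min m M ≤ min (n+m) M := by omega
                have : ((min m M : ℕ) : ℝ) ≤ (min (n+m) M : ℕ) := by exact_mod_cast this
                rw [Nat.cast_add n m]; linarith
            _ ≤ _ := by gcongr

theorem exists_N0 {δ : ℝ} (hδ : 0 < δ) : ∃ N0 : ℕ, 1 ≤ N0 ∧ ∀ L, ∑ n ∈ Finset.Icc N0 L, (2:ℝ) ^ (-(δ * n)) ≤ 1 / 2 := by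
  set x : ℝ := 2 ^ (-δ) with hx
  have hx0 : 0 < x := by positivity
  have hx1 : x < 1 := Real.rpow_lt_one_of_one_lt_of_neg (by norm_num) (by linarith)
  have ht := tendsto_pow_atTop_nhds_zero_of_lt_one hx0.le hx1
  have h2 : 0 < (1 - x) / 2 := by linarith
  obtain ⟨N, hN, hN1⟩ := ((ht.eventually (gt_mem_nhds h2)).and (eventually_ge_atTop 1)).exists
  refine ⟨N, hN1, fun L => ?_⟩
  have e : ∑ n ∈ Finset.Icc N L, (2:ℝ) ^ (-(δ * n)) = ∑ n ∈ Finset.Ico N (L+1), x ^ n := by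
    refine Finset.sum_congr (by ext; simp) fun n _ => ?_
    rw [hx, ← Real.rpow_natCast, ← Real.rpow_mul (by norm_num)]; congr 1; ring
  rw [e]
  refine (geom_sum_Ico_le_of_lt_one hx0.le hx1).trans ?_
  rw [div_le_iff₀ (by linarith)]; linarith

theorem packing (h : GoodM ρ D) {r r' : ℝ} (hr0 : 0 ≤ r) (hr : r < r')
    (hio : ∀ᵐ Z ∂ρ, ∃ᶠ n : ℕ in atTop, (2:ℝ) ^ (-(r * n)) < ρ.real (cyl (seg Z n))) :
    ∃ N, ρ.real {Z | ∃ n ≥ N, ρ.real (cyl (seg Z n)) < (2:ℝ) ^ (-(r' * n))} < 1 := by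
  set δ := (r' - r) / 4 with hδd
  have hδ : 0 < δ := by linarith
  obtain ⟨N0, hN1, hN0⟩ := exists_N0 hδ
  obtain ⟨M, hM⟩ : ∃ M, ρ.real (Cset ρ r N0 M) ≤ δ / 2 := by
    have hanti : Antitone (fun M => Cset ρ r N0 M) := fun i j hij Z hZ n h1 h2 => hZ n h1 (h2.trans hij)
    have ht := tendsto_measure_iInter_atTop (μ := ρ) (fun n => (Cset_meas r N0 n).nullMeasurableSet) hanti ⟨0, measure_ne_top _ _⟩
    have hz : ρ (⋂ M, Cset ρ r N0 M) = 0 := by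
      refine measure_mono_null ?_ (ae_iff.1 hio)
      intro Z hZ hf
      obtain ⟨n, hn, hn2⟩ := (hf.and_eventually (eventually_ge_atTop N0)).exists
      have := Set.mem_iInter.1 hZ n n hn2 le_rfl
      linarith
    rw [hz] at ht
    have ht2 : Tendsto (fun n => ρ.real (Cset ρ r N0 n)) atTop (nhds 0) := by
      have := (ENNReal.tendsto_toReal (ENNReal.zero_ne_top)).comp ht
      rw [ENNReal.toReal_zero] at this; exact this
    obtain ⟨n, hn⟩ := (ht2.eventually (gt_mem_nhds (show (0:ℝ) < δ / 2 by positivity))).exists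
    exact ⟨n, hn.le⟩
  set C := Cset ρ r N0 M with hC
  have hF1 : ρ.real {Z | ∃ L : ℕ, δ * L < occ C L Z} ≤ 1 / 2 := by
    refine (maximal h.mp (Cset_meas r N0 M) hδ).trans ?_
    rw [div_le_iff₀ hδ]; linarith
  have hF2 : ρ.real (⋃ L : ℕ, {Z | (4 * (((L:ℝ) + 1) * (L + 2))) * ρ.real (cyl (seg Z L)) < Wf ρ δ N0 L (seg Z L)}) ≤ 1 / 4 := by
    refine union_tele _ (by norm_num) fun n => ?_
    refine (markov_S n (Wf ρ δ N0 n) (Wf_nonneg δ N0 n) (by positivity) (Wf_sum hN0 n n)).trans (le_of_eq ?_)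
    field_simp
  obtain ⟨N, hN⟩ := eventually_atTop.1 (asym hδ (4 * 2 ^ (2 * M : ℝ)))
  refine ⟨N, ?_⟩
  refine lt_of_le_of_lt (measureReal_mono (s₂ := {Z | ∃ L : ℕ, δ * L < occ C L Z} ∪
    (⋃ L : ℕ, {Z | (4 * (((L:ℝ) + 1) * (L + 2))) * ρ.real (cyl (seg Z L)) < Wf ρ δ N0 L (seg Z L)})) ?_) ?_
  · rintro Z ⟨n, hn, hn2⟩
    by_contra hno
    simp only [Set.mem_union, Set.mem_iUnion, Set.mem_ofPred_eq, not_or, not_exists, not_lt] at hno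
    have h1 := hno.1 n
    have h2 := hno.2 n
    have h3 := Wf_ge (ρ := ρ) hr0 hδ hN1 M n n le_rfl Z
    have h4 := hN n hn
    rw [← hC] at h3
    have h5 : (2:ℝ) ^ (-((r + 3 * δ) * n + 2 * M)) ≤ 4 * (((n:ℝ) + 1) * (n + 2)) * ρ.real (cyl (seg Z n)) := by
      refine le_trans ?_ (h3.trans h2)
      refine Real.rpow_le_rpow_of_exponent_le (by norm_num) ?_
      have : ((min n M : ℕ) : ℝ) ≤ M := by exact_mod_cast min_le_right n M
      linarith
    have h6 : (2:ℝ) ^ (-((r + 3 * δ) * n + 2 * M)) < 4 * (((n:ℝ) + 1) * (n + 2)) * 2 ^ (-(r' * n)) := by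
      refine lt_of_le_of_lt h5 ?_
      gcongr
    have h7 : (2:ℝ) ^ (2 * M : ℝ) * (4 * (((n:ℝ) + 1) * (n + 2)) * 2 ^ (-(r' * n))) ≤ 2 ^ (δ * n) * 2 ^ (-(r' * n)) := by
      calc _ = (4 * 2 ^ (2 * M : ℝ)) * (((n:ℝ) + 1) * (n + 2)) * 2 ^ (-(r' * n)) := by ring
        _ ≤ _ := by gcongr
    have h8 : (2:ℝ) ^ (2 * M : ℝ) * (2:ℝ) ^ (-((r + 3 * δ) * n + 2 * M)) = 2 ^ (δ * n) * 2 ^ (-(r' * n)) := by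
      rw [← Real.rpow_add (by norm_num), ← Real.rpow_add (by norm_num)]; congr 1; rw [hδd]; ring
    have h9 : (0:ℝ) < 2 ^ (2 * M : ℝ) := by positivity
    have := mul_lt_mul_of_pos_left h6 h9
    linarith
  · refine lt_of_le_of_lt (measureReal_union_le _ _) ?_
    linarith

end Packing

set_option linter.unusedSectionVars false
section Final
variable {ρ : Measure Cantor} [IsProbabilityMeasure ρ] {D : ℕ}

theorem emp_le_iff (h : GoodM ρ D) {n : ℕ} (hn : 1 ≤ n) (Z : Cantor) (r : ℝ) :
    empEntropy ρ n Z ≤ r ↔ (2:ℝ) ^ (-(r * n)) ≤ ρ.real (cyl (seg Z n)) := by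
  have hn0 : (0:ℝ) < n := by exact_mod_cast hn
  rw [← Real.le_logb_iff_rpow_le (by norm_num) (h.pos _)]
  unfold empEntropy
  change -(1 / (n:ℝ)) * Real.logb 2 (ρ.real (cyl (seg Z n))) ≤ r ↔ _
  have : -(1 / (n:ℝ)) * Real.logb 2 (ρ.real (cyl (seg Z n))) = (-Real.logb 2 (ρ.real (cyl (seg Z n)))) / n := by ring
  rw [this, div_le_iff₀ hn0]
  constructor <;> intro <;> linarith

theorem le_emp_iff (h : GoodM ρ D) {n : ℕ} (hn : 1 ≤ n) (Z : Cantor) (r : ℝ) :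
    r ≤ empEntropy ρ n Z ↔ ρ.real (cyl (seg Z n)) ≤ (2:ℝ) ^ (-(r * n)) := by
  have hn0 : (0:ℝ) < n := by exact_mod_cast hn
  rw [← Real.logb_le_iff_le_rpow (by norm_num) (h.pos _)]
  unfold empEntropy
  change r ≤ -(1 / (n:ℝ)) * Real.logb 2 (ρ.real (cyl (seg Z n))) ↔ _
  have : -(1 / (n:ℝ)) * Real.logb 2 (ρ.real (cyl (seg Z n))) = (-Real.logb 2 (ρ.real (cyl (seg Z n)))) / n := by ring
  rw [this, le_div_iff₀ hn0]
  constructor <;> intro <;> linarith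

theorem emp_nonneg (h : GoodM ρ D) (n : ℕ) (Z : Cantor) : 0 ≤ empEntropy ρ n Z := by
  rcases Nat.eq_zero_or_pos n with rfl | hn
  · simp [empEntropy]
  · rw [le_emp_iff h hn]; simp [measureReal_le_one]

theorem emp_le (h : GoodM ρ D) (n : ℕ) (Z : Cantor) : empEntropy ρ n Z ≤ D := by
  rcases Nat.eq_zero_or_pos n with rfl | hn
  · simp [empEntropy]
  · rw [emp_le_iff h hn]
    have h1 := h.low (seg Z n)
    rw [seg_length] at h1
    rw [Real.rpow_neg (by norm_num), ← Nat.cast_mul, Real.rpow_natCast, inv_le_iff_one_le_mul₀' (by positivity)]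
    exact h1

theorem emp_meas (n : ℕ) : Measurable (empEntropy ρ n) :=
  measurable_of_seg (fun x => -(1 / (n : ℝ)) * Real.logb 2 (ρ (cyl x)).toReal) n

theorem emp_integral (n : ℕ) : ∫ Z, empEntropy ρ n Z ∂ρ = entropyAt ρ n := by
  have h1 := integral_seg ρ n (fun x => -(1 / (n : ℝ)) * Real.logb 2 (ρ (cyl x)).toReal)
  unfold empEntropy entropyAt
  rw [h1, sum_S_fin n (fun x => (ρ (cyl x)).toReal * Real.logb 2 (ρ (cyl x)).toReal), Finset.mul_sum]
  refine Finset.sum_congr rfl fun x _ => ?_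
  unfold Measure.real; ring

theorem lim_nonpos {μ : Measure Cantor} [IsProbabilityMeasure μ] (g : ℕ → Cantor → ℝ) (hg : ∀ n, Measurable (g n)) {B c : ℝ}
    (hB : ∀ n Z, |g n Z| ≤ B)
    (hev : ∀ᵐ Z ∂μ, ∀ᶠ n in atTop, g n Z ≤ 0) (hc : Tendsto (fun n => ∫ Z, g n Z ∂μ) atTop (nhds c)) : c ≤ 0 := by
  have hb : ∀ n Z, ‖max (g n Z) 0‖ ≤ B := by
    intro n Z
    have h1 := hB n Z
    rw [Real.norm_of_nonneg (le_max_right _ _)]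
    exact max_le ((le_abs_self _).trans h1) ((abs_nonneg _).trans h1)
  have h1 : Tendsto (fun n => ∫ Z, max (g n Z) 0 ∂μ) atTop (nhds (∫ _, (0:ℝ) ∂μ)) := by
    refine tendsto_integral_of_dominated_convergence (fun _ => B) (fun n => ((hg n).max measurable_const).aestronglyMeasurable)
      (integrable_const B) (fun n => Eventually.of_forall (hb n)) ?_
    filter_upwards [hev] with Z hZ
    refine tendsto_const_nhds.congr' ?_
    filter_upwards [hZ] with n hn
    exact (max_eq_right hn).symm
  rw [integral_zero] at h1
  refine le_of_tendsto_of_tendsto' hc h1 fun n => ?_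
  refine integral_mono ?_ ?_ (fun Z => le_max_left _ _)
  · exact Integrable.of_bound (hg n).aestronglyMeasurable B (Eventually.of_forall (hB n))
  · exact Integrable.of_bound ((hg n).max measurable_const).aestronglyMeasurable B (Eventually.of_forall (hb n))

theorem s_le (h : GoodM ρ D) {s r : ℝ} (hs : Tendsto (entropyAt ρ) atTop (nhds s))
    (hev : ∀ᵐ Z ∂ρ, ∀ᶠ n : ℕ in atTop, (2:ℝ) ^ (-(r * n)) ≤ ρ.real (cyl (seg Z n))) : s ≤ r := by
  have := lim_nonpos (μ := ρ) (fun n Z => empEntropy ρ n Z - r) (fun n => (emp_meas n).sub_const r) (B := D + |r|) (c := s - r) ?_ ?_ ?_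
  · linarith
  · intro n Z
    have h1 := emp_nonneg h n Z
    have h2 := emp_le h n Z
    have h3 := le_abs_self r
    have h4 := neg_abs_le r
    rw [abs_le]; constructor <;> linarith
  · filter_upwards [hev] with Z hZ
    filter_upwards [hZ, eventually_ge_atTop 1] with n hn hn1
    have := (emp_le_iff h hn1 Z r).2 hn
    linarith
  · refine (hs.sub_const r).congr fun n => ?_
    rw [integral_sub (Integrable.of_bound (emp_meas n).aestronglyMeasurable (D:ℝ) (Eventually.of_forall fun Z => by
      rw [Real.norm_of_nonneg (emp_nonneg h n Z)]; exact emp_le h n Z)) (integrable_const r), emp_integral]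
    simp

theorem le_s (h : GoodM ρ D) {s r : ℝ} (hs : Tendsto (entropyAt ρ) atTop (nhds s))
    (hev : ∀ᵐ Z ∂ρ, ∀ᶠ n : ℕ in atTop, ρ.real (cyl (seg Z n)) ≤ (2:ℝ) ^ (-(r * n))) : r ≤ s := by
  have := lim_nonpos (μ := ρ) (fun n Z => r - empEntropy ρ n Z) (fun n => (emp_meas n).const_sub r) (B := D + |r|) (c := r - s) ?_ ?_ ?_
  · linarith
  · intro n Z
    have h1 := emp_nonneg h n Z
    have h2 := emp_le h n Z
    have h3 := le_abs_self r
    have h4 := neg_abs_le r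
    rw [abs_le]; constructor <;> linarith
  · filter_upwards [hev] with Z hZ
    filter_upwards [hZ, eventually_ge_atTop 1] with n hn hn1
    have := (le_emp_iff h hn1 Z r).2 hn
    linarith
  · refine (hs.const_sub r).congr fun n => ?_
    rw [integral_sub (integrable_const r) (Integrable.of_bound (emp_meas n).aestronglyMeasurable (D:ℝ) (Eventually.of_forall fun Z => by
      rw [Real.norm_of_nonneg (emp_nonneg h n Z)]; exact emp_le h n Z)), emp_integral]
    simp

theorem dichotomy (r : ℝ) : (∃ N : ℕ, ρ.real {Z | ∃ n ≥ N, (2:ℝ) ^ (-(r * n)) < ρ.real (cyl (seg Z n))} < 1) ∨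
    ∀ᵐ Z ∂ρ, ∃ᶠ n : ℕ in atTop, (2:ℝ) ^ (-(r * n)) < ρ.real (cyl (seg Z n)) := by
  by_cases hc : ∃ N : ℕ, ρ.real {Z | ∃ n ≥ N, (2:ℝ) ^ (-(r * n)) < ρ.real (cyl (seg Z n))} < 1
  · exact Or.inl hc
  · right
    push Not at hc
    simp only [frequently_atTop]
    refine ae_all_iff.2 fun N => ?_
    have hm : MeasurableSet {Z | ∃ n ≥ N, (2:ℝ) ^ (-(r * n)) < ρ.real (cyl (seg Z n))} := by
      have : {Z | ∃ n ≥ N, (2:ℝ) ^ (-(r * n)) < ρ.real (cyl (seg Z n))} =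
          ⋃ n, {Z | (fun x : BStr => n ≥ N ∧ (2:ℝ) ^ (-(r * n)) < ρ.real (cyl x)) (seg Z n)} := by
        ext; simp
      rw [this]
      exact MeasurableSet.iUnion fun n => measurableSet_seg (fun x : BStr => n ≥ N ∧ (2:ℝ) ^ (-(r * n)) < ρ.real (cyl x)) n
    have h1 : ρ {Z | ∃ n ≥ N, (2:ℝ) ^ (-(r * n)) < ρ.real (cyl (seg Z n))} = 1 := by
      refine le_antisymm prob_le_one ?_
      have := ENNReal.ofReal_le_ofReal (hc N)
      rwa [ofReal_measureReal, ENNReal.ofReal_one] at this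
    exact (mem_ae_iff_prob_eq_one hm).2 h1

theorem upper (h : GoodM ρ D) {μ : Measure Cantor} (hμ : MLAC μ ρ) {s r : ℝ} (hs : Tendsto (entropyAt ρ) atTop (nhds s))
    (hs0 : 0 ≤ s) (hr : s < r) : ∀ᵐ Z ∂μ, ∀ᶠ n : ℕ in atTop, empEntropy ρ n Z ≤ r := by
  obtain ⟨r1, h1, h2⟩ := exists_between hr
  obtain ⟨r2, h3, h4⟩ := exists_between h2
  obtain ⟨r0, h5, h6⟩ := exists_between h1
  rcases dichotomy (ρ := ρ) r1 with ⟨N, hN⟩ | hio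
  · exfalso
    have := le_s h hs (LO h mlac_self (hs0.trans h5.le) h6 N hN)
    linarith
  · obtain ⟨N, hN⟩ := packing h (hs0.trans h1.le) h3 hio
    filter_upwards [UP h hμ (by linarith) h4 N hN] with Z hZ
    filter_upwards [hZ, eventually_ge_atTop 1] with n hn hn1
    exact (emp_le_iff h hn1 Z r).2 hn

theorem lower (h : GoodM ρ D) {μ : Measure Cantor} (hμ : MLAC μ ρ) {s r : ℝ} (hs : Tendsto (entropyAt ρ) atTop (nhds s))
    (hr : r < s) : ∀ᵐ Z ∂μ, ∀ᶠ n : ℕ in atTop, r ≤ empEntropy ρ n Z := by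
  rcases lt_or_ge r 0 with hr0 | hr0
  · exact Eventually.of_forall fun Z => Eventually.of_forall fun n => hr0.le.trans (emp_nonneg h n Z)
  obtain ⟨r1, h1, h2⟩ := exists_between hr
  obtain ⟨r2, h3, h4⟩ := exists_between h2
  obtain ⟨r3, h5, h6⟩ := exists_between h4
  rcases dichotomy (ρ := ρ) r1 with ⟨N, hN⟩ | hio
  · filter_upwards [LO h hμ hr0 h1 N hN] with Z hZ
    filter_upwards [hZ, eventually_ge_atTop 1] with n hn hn1
    exact (le_emp_iff h hn1 Z r).2 hn
  · exfalso
    obtain ⟨N, hN⟩ := packing h (hr0.trans h1.le) h3 hio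
    have := s_le h hs (UP h mlac_self (by linarith) h5 N hN)
    linarith

theorem good_of {E : ℝ} (hcomp : ComputableMeasure ρ) (herg : Ergodic shift ρ)
    (hD : ∀ x : BStr, ENNReal.ofReal ((2 : ℝ) ^ (-(E * (x.length : ℝ)))) ≤ ρ (cyl x)) : GoodM ρ ⌈E⌉₊ := by
  refine ⟨hcomp, herg, fun x => ?_⟩
  have h1 : (2:ℝ) ^ (-(E * (x.length : ℝ))) ≤ ρ.real (cyl x) :=
    (ENNReal.ofReal_le_iff_le_toReal (measure_ne_top _ _)).1 (hD x)
  rw [← Real.rpow_natCast, Nat.cast_mul]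
  calc (1:ℝ) ≤ 2 ^ ((⌈E⌉₊ : ℝ) * x.length) * 2 ^ (-(E * (x.length : ℝ))) := by
        rw [← Real.rpow_add (by norm_num)]
        refine Real.one_le_rpow (by norm_num) ?_
        have := Nat.le_ceil E
        have : (0:ℝ) ≤ x.length := by positivity
        nlinarith
    _ ≤ _ := by gcongr

end Final

/-- for a computable shift-invariant ergodic `ρ` with
`ρ[x] ≥ 2^{-D·|x|}` for all strings `x` (so the `h_n^ρ` are bounded by `D`),
entropy `H(ρ) = s`, and any `μ ≪_ML ρ`, one has
`lim_n ∫ |h_n^ρ(Z) - s| dμ(Z) = 0`. -/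
theorem SMB_for_measures
    (ρ : Measure Cantor) [IsProbabilityMeasure ρ]
    (hcomp : ComputableMeasure ρ) (herg : Ergodic shift ρ)
    (D : ℝ)
    (hD : ∀ x : BStr, ENNReal.ofReal ((2 : ℝ) ^ (-(D * (x.length : ℝ)))) ≤ ρ (cyl x))
    (s : ℝ) (hs : Tendsto (entropyAt ρ) atTop (nhds s))
    (μ : Measure Cantor) [IsProbabilityMeasure μ] (hml : MLAC μ ρ) :
    Tendsto (fun n => ∫ Z, |empEntropy ρ n Z - s| ∂μ) atTop (nhds 0) := by
  have h := good_of hcomp herg hD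
  have hs0 : 0 ≤ s := by
    refine ge_of_tendsto' hs fun n => ?_
    rw [← emp_integral]
    exact integral_nonneg fun Z => emp_nonneg h n Z
  have hup : ∀ᵐ Z ∂μ, ∀ k : ℕ, ∀ᶠ n : ℕ in atTop, empEntropy ρ n Z ≤ s + 1 / ((k:ℝ) + 1) :=
    ae_all_iff.2 fun k => upper h hml hs hs0 (by linarith [Nat.one_div_pos_of_nat (α := ℝ) (n := k)])
  have hlo : ∀ᵐ Z ∂μ, ∀ k : ℕ, ∀ᶠ n : ℕ in atTop, s - 1 / ((k:ℝ) + 1) ≤ empEntropy ρ n Z :=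
    ae_all_iff.2 fun k => lower h hml hs (by linarith [Nat.one_div_pos_of_nat (α := ℝ) (n := k)])
  have key : Tendsto (fun n => ∫ Z, |empEntropy ρ n Z - s| ∂μ) atTop (nhds (∫ _, (0:ℝ) ∂μ)) := by
    refine tendsto_integral_of_dominated_convergence (fun _ => (⌈D⌉₊ : ℝ) + s)
      (fun n => (((emp_meas n).sub_const s).abs).aestronglyMeasurable) (integrable_const _) (fun n => Eventually.of_forall fun Z => ?_) ?_
    · have h1 := emp_nonneg h n Z
      have h2 := emp_le h n Z
      rw [Real.norm_eq_abs, abs_abs, abs_le]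
      constructor <;> linarith
    · filter_upwards [hup, hlo] with Z h1 h2
      rw [Metric.tendsto_atTop']
      intro ε hε
      obtain ⟨k, hk⟩ := exists_nat_one_div_lt hε
      obtain ⟨N, hN⟩ := eventually_atTop.1 ((h1 k).and (h2 k))
      refine ⟨N, fun n hn => ?_⟩
      have := hN n hn.le
      rw [Real.dist_eq, sub_zero, abs_abs]
      refine lt_of_le_of_lt ?_ hk
      rw [abs_le]; constructor <;> linarith [this.1, this.2]
  rwa [integral_zero] at key
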